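/- arXiv:2209.13784 — 4 statements merged into one kernel-verified Lean document; each statement's English description precedes it below -/
import Mathlib

section
/- For every nonnegative integer n: if n is even then cp^o_{1,1,2}(n) ≤ cp^e_{1,1,2}(n), and if n is odd then cp^o_{1,1,2}(n) = cp^e_{1,1,2}(n). -/
/-- `(γ, ρ, σ)` is an `(a,b,m)`-copartition: every part of `γ` is `≥ a` and `≡ a (mod m)`,
every part of `σ` is `≥ b` and `≡ b (mod m)`, and `ρ` consists of exactly `ν(σ)` parts,
each of size `m · ν(γ)`. -/
def IsCopartition (a b m : ℕ) (γ ρ σ : Multiset ℕ) : Prop :=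
  (∀ x ∈ γ, a ≤ x ∧ x % m = a % m) ∧
  (∀ x ∈ σ, b ≤ x ∧ x % m = b % m) ∧
  ρ = Multiset.replicate (Multiset.card σ) (m * Multiset.card γ)

/-- The set of `(a,b,m)`-copartitions of size `n`. -/
def cpSet (a b m n : ℕ) : Set (Multiset ℕ × Multiset ℕ × Multiset ℕ) :=
  {t | IsCopartition a b m t.1 t.2.1 t.2.2 ∧ t.1.sum + t.2.1.sum + t.2.2.sum = n}

/-- `cp^o_{a,b,m}(n)`: the number of `(a,b,m)`-copartitions of size `n`
with an odd number of ground parts. -/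
noncomputable def cpOdd (a b m n : ℕ) : ℕ :=
  {t ∈ cpSet a b m n | Odd (Multiset.card t.1)}.ncard

/-- `cp^e_{a,b,m}(n)`: the number of `(a,b,m)`-copartitions of size `n`
with an even number of ground parts. -/
noncomputable def cpEven (a b m n : ℕ) : ℕ :=
  {t ∈ cpSet a b m n | Even (Multiset.card t.1)}.ncard

/-- Pairs (ground, sky) of size `n` with a predicate on the numbers of parts. -/
def pairSet (P : ℕ → ℕ → Prop) (a b n : ℕ) : Set (Multiset ℕ × Multiset ℕ) :=
  {t | (∀ x ∈ t.1, a ≤ x ∧ x % 2 = a % 2) ∧ (∀ x ∈ t.2, b ≤ x ∧ x % 2 = b % 2) ∧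
    t.1.sum + 2 * Multiset.card t.1 * Multiset.card t.2 + t.2.sum = n ∧
    P (Multiset.card t.1) (Multiset.card t.2)}

lemma card_le_sum_of_pos (s : Multiset ℕ) (h : ∀ x ∈ s, 1 ≤ x) : Multiset.card s ≤ s.sum := by
  have := Multiset.card_nsmul_le_sum (s := s) (a := 1) h
  simpa using this

lemma finite_multisets (n : ℕ) :
    {s : Multiset ℕ | (∀ x ∈ s, 1 ≤ x) ∧ s.sum ≤ n}.Finite := by
  classical
  apply Set.Finite.subset (Multiset.finite_toSet (Multiset.powerset (n • Multiset.range (n+1))))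
  rintro s ⟨h1, h2⟩
  simp only [Set.mem_ofPred_eq, Multiset.mem_powerset]
  rw [Multiset.le_iff_count]
  intro x
  by_cases hx : x ∈ s
  · have hxn : x ≤ n := (Multiset.single_le_sum (fun _ _ => Nat.zero_le _) x hx).trans h2
    have hc : Multiset.count x s ≤ n :=
      (Multiset.count_le_card x s).trans ((card_le_sum_of_pos s h1).trans h2)
    have : Multiset.count x (Multiset.range (n+1)) = 1 :=
      Multiset.count_eq_one_of_mem (Multiset.nodup_range _) (by simp; omega)
    rw [Multiset.count_nsmul, this]
    omega
  · rw [Multiset.count_eq_zero_of_notMem hx]; exact Nat.zero_le _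

lemma pairSet_finite (P : ℕ → ℕ → Prop) (a b n : ℕ) (ha : 1 ≤ a) (hb : 1 ≤ b) :
    (pairSet P a b n).Finite := by
  apply Set.Finite.subset ((finite_multisets n).prod (finite_multisets n))
  rintro ⟨g, s⟩ ⟨h1, h2, h3, -⟩
  simp only at h1 h2 h3
  have : 0 ≤ 2 * Multiset.card g * Multiset.card s := Nat.zero_le _
  exact ⟨⟨fun x hx => ha.trans (h1 x hx).1, by simp only; omega⟩,
    ⟨fun x hx => hb.trans (h2 x hx).1, by simp only; omega⟩⟩

lemma pairSet_swap (P : ℕ → ℕ → Prop) (a b n : ℕ) :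
    (pairSet P a b n).ncard = (pairSet (fun k l => P l k) b a n).ncard := by
  apply Set.ncard_congr (fun t _ => t.swap)
  · rintro ⟨g, s⟩ ⟨h1, h2, h3, h4⟩
    refine ⟨h2, h1, ?_, h4⟩
    simp only [Prod.swap] at h3 ⊢
    rw [← h3]; ring
  · intro x y _ _ h
    exact Prod.swap_injective h
  · rintro ⟨g, s⟩ ⟨h1, h2, h3, h4⟩
    refine ⟨(s, g), ⟨h2, h1, ?_, h4⟩, rfl⟩
    simp only at h3 ⊢
    rw [← h3]; ring

lemma pairSet_notMem (P : ℕ → ℕ → Prop) (a b n : ℕ) :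
    {t ∈ pairSet P a b n | a ∉ t.1} = pairSet P (a+2) b n := by
  ext ⟨g, s⟩
  constructor
  · rintro ⟨⟨h1, h2, h3, h4⟩, h5⟩
    refine ⟨fun x hx => ?_, h2, h3, h4⟩
    have := h1 x hx
    have hne : x ≠ a := fun h => h5 (h ▸ hx)
    omega
  · rintro ⟨h1, h2, h3, h4⟩
    refine ⟨⟨fun x hx => ?_, h2, h3, h4⟩, fun h => ?_⟩
    · have := h1 x hx
      omega
    · have := (h1 a h).1
      omega

lemma sum_map_add_two (s : Multiset ℕ) :
    (s.map (· + 2)).sum = s.sum + 2 * Multiset.card s := by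
  induction s using Multiset.induction_on with
  | empty => simp
  | cons a s ih => simp only [Multiset.map_cons, Multiset.sum_cons, Multiset.card_cons, ih]; ring

lemma pairSet_mem (P : ℕ → ℕ → Prop) (a b n : ℕ) :
    {t ∈ pairSet P a b (n + a) | a ∈ t.1}.ncard =
      (pairSet (fun k l => P (k+1) l) a (b+2) n).ncard := by
  apply Set.ncard_congr (fun t _ => (t.1.erase a, t.2.map (· + 2)))
  · rintro ⟨g, s⟩ ⟨⟨h1, h2, h3, h4⟩, h5⟩
    obtain ⟨g, rfl⟩ := Multiset.exists_cons_of_mem h5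
    simp only [Multiset.card_cons, Multiset.sum_cons] at h1 h2 h3 h4 ⊢
    rw [Multiset.erase_cons_head]
    refine ⟨fun x hx => h1 x (Multiset.mem_cons_of_mem hx), ?_, ?_, ?_⟩
    · intro x hx
      simp only [Multiset.mem_map] at hx
      obtain ⟨y, hy, rfl⟩ := hx
      have := h2 y hy
      omega
    · simp only [sum_map_add_two, Multiset.card_map]
      linarith
    · simpa using h4
  · rintro ⟨g, s⟩ ⟨g', s'⟩ ⟨_, h⟩ ⟨_, h'⟩ he
    simp only [Prod.mk.injEq] at he h h' ⊢
    refine ⟨?_, Multiset.map_injective (add_left_injective 2) he.2⟩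
    rw [← Multiset.cons_erase h, ← Multiset.cons_erase h', he.1]
  · rintro ⟨g, s⟩ ⟨h1, h2, h3, h4⟩
    simp only at h1 h2 h3 h4
    have hs : (s.map (· - 2)).map (· + 2) = s := by
      rw [Multiset.map_map]
      conv_rhs => rw [← Multiset.map_id s]
      apply Multiset.map_congr rfl
      intro x hx
      have := h2 x hx
      simp only [Function.comp, id]
      omega
    refine ⟨(a ::ₘ g, s.map (· - 2)), ⟨⟨?_, ?_, ?_, ?_⟩, Multiset.mem_cons_self _ _⟩, ?_⟩
    · intro x hx
      rcases Multiset.mem_cons.1 hx with rfl | hx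
      · exact ⟨le_rfl, rfl⟩
      · exact h1 x hx
    · intro x hx
      simp only [Multiset.mem_map] at hx
      obtain ⟨y, hy, rfl⟩ := hx
      have := h2 y hy
      omega
    · have := sum_map_add_two (s.map (· - 2))
      rw [hs, Multiset.card_map] at this
      simp only [Multiset.sum_cons, Multiset.card_cons, Multiset.card_map]
      rw [this] at h3
      linarith
    · simpa using h4
    · simp only [Multiset.erase_cons_head, hs]

lemma pairSet_split (P : ℕ → ℕ → Prop) (a b n : ℕ) (ha : 1 ≤ a) (hb : 1 ≤ b) :
    (pairSet P a b n).ncard = (pairSet P (a+2) b n).ncard +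
      if a ≤ n then (pairSet (fun k l => P (k+1) l) a (b+2) (n - a)).ncard else 0 := by
  have hfin := pairSet_finite P a b n ha hb
  have hu : pairSet P a b n =
      {t ∈ pairSet P a b n | a ∉ t.1} ∪ {t ∈ pairSet P a b n | a ∈ t.1} := by
    ext t
    simp only [Set.mem_union, Set.mem_ofPred_eq]
    tauto
  rw [hu, Set.ncard_union_eq ?_ (hfin.subset (Set.sep_subset _ _))
    (hfin.subset (Set.sep_subset _ _)), pairSet_notMem]
  · congr 1
    split_ifs with h
    · obtain ⟨m, rfl⟩ := Nat.exists_eq_add_of_le' h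
      rw [pairSet_mem, Nat.add_sub_cancel]
    · rw [Set.ncard_eq_zero (hfin.subset (Set.sep_subset _ _))]
      ext ⟨g, s⟩
      simp only [Set.mem_ofPred_eq, Set.mem_empty_iff_false, iff_false]
      rintro ⟨⟨h1, h2, h3, h4⟩, h5⟩
      have : a ≤ g.sum := Multiset.single_le_sum (fun _ _ => Nat.zero_le _) a h5
      simp only at h3
      have : 0 ≤ 2 * Multiset.card g * Multiset.card s := Nat.zero_le _
      omega
  · rw [Set.disjoint_left]
    rintro t ⟨_, h⟩ ⟨_, h'⟩
    exact h h'

lemma pairSet_split' (P : ℕ → ℕ → Prop) (a b n : ℕ) (ha : 1 ≤ a) (hb : 1 ≤ b) :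
    (pairSet P a b n).ncard = (pairSet P a (b+2) n).ncard +
      if b ≤ n then (pairSet (fun k l => P k (l+1)) (a+2) b (n - b)).ncard else 0 := by
  rw [pairSet_swap, pairSet_split _ _ _ _ hb ha, pairSet_swap P a (b+2),
    pairSet_swap (fun k l => P k (l+1))]

/-- Signed generating function. -/
noncomputable def signedGF (a b : ℕ) : PowerSeries ℤ :=
  PowerSeries.mk fun n => ((pairSet (fun k _ => Even k) a b n).ncard : ℤ) -
    ((pairSet (fun k _ => Odd k) a b n).ncard : ℤ)

lemma signedGF_rec1 (a b : ℕ) (ha : 1 ≤ a) (hb : 1 ≤ b) :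
    signedGF a b = signedGF (a+2) b - PowerSeries.X ^ a * signedGF a (b+2) := by
  ext n
  rw [map_sub, PowerSeries.coeff_X_pow_mul']
  simp only [signedGF, PowerSeries.coeff_mk]
  rw [pairSet_split _ a b n ha hb, pairSet_split (fun k _ => Odd k) a b n ha hb]
  have e1 : (fun k _ : ℕ => Even (k+1)) = fun k _ => Odd k := by
    funext k _; simp [Nat.even_add_one]
  have e2 : (fun k _ : ℕ => Odd (k+1)) = fun k _ => Even k := by
    funext k _; simp [Nat.odd_add_one]
  rw [e1, e2]
  split_ifs <;> push_cast <;> ring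

lemma signedGF_rec2 (a b : ℕ) (ha : 1 ≤ a) (hb : 1 ≤ b) :
    signedGF a b = signedGF a (b+2) + PowerSeries.X ^ b * signedGF (a+2) b := by
  ext n
  rw [map_add, PowerSeries.coeff_X_pow_mul']
  simp only [signedGF, PowerSeries.coeff_mk]
  rw [pairSet_split' _ a b n ha hb, pairSet_split' (fun k _ => Odd k) a b n ha hb]
  split_ifs <;> push_cast <;> ring

lemma signedGF_diag (a : ℕ) (ha : 1 ≤ a) :
    signedGF a a * (1 - PowerSeries.X ^ (2 * a)) =
      signedGF (a+2) (a+2) * (1 + PowerSeries.X ^ (2 * a)) * (1 + PowerSeries.X ^ (2 * (a+1))) := by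
  have h1 := signedGF_rec1 a a ha ha
  have h2 := signedGF_rec2 a a ha ha
  have h3 := signedGF_rec1 a (a+2) ha (by omega)
  have h4 := signedGF_rec2 a (a+2) ha (by omega)
  have e1 : signedGF a a * (1 - PowerSeries.X ^ a) =
      signedGF a (a+2) * (1 + PowerSeries.X ^ (2 * a)) := by
    linear_combination h2 + PowerSeries.X ^ a * (-h1)
  have e2 : signedGF a (a+2) * (1 + PowerSeries.X ^ a) =
      signedGF (a+2) (a+2) * (1 + PowerSeries.X ^ (2 * (a+1))) := by
    linear_combination h3 + PowerSeries.X ^ a * h4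
  linear_combination (1 + PowerSeries.X ^ a) * e1 + (1 + PowerSeries.X ^ (2 * a)) * e2

/-- Coefficients up to `N` are nonnegative, and vanish at odd indices. -/
def Good (N : ℕ) (F : PowerSeries ℤ) : Prop :=
  ∀ m ≤ N, 0 ≤ PowerSeries.coeff m F ∧ (Odd m → PowerSeries.coeff m F = 0)

lemma good_mul (N c : ℕ) (F : PowerSeries ℤ) (h : Good N F) :
    Good N (F * (1 + PowerSeries.X ^ (2 * c))) := by
  intro m hm
  rw [mul_add, mul_one, map_add, PowerSeries.coeff_mul_X_pow']
  have h1 := h m hm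
  have h2 := h (m - 2 * c) (by omega)
  split_ifs with hc
  · refine ⟨add_nonneg h1.1 h2.1, fun ho => ?_⟩
    rw [h1.2 ho, h2.2 (by rw [Nat.odd_iff] at *; omega), add_zero]
  · simpa using h1

lemma good_div (N c : ℕ) (hc : 1 ≤ c) (F : PowerSeries ℤ)
    (h : Good N (F * (1 - PowerSeries.X ^ (2 * c)))) : Good N F := by
  intro m
  induction m using Nat.strong_induction_on with
  | _ m ih =>
    intro hm
    have h1 := h m hm
    rw [mul_sub, mul_one, map_sub, PowerSeries.coeff_mul_X_pow'] at h1
    split_ifs at h1 with hcm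
    · have h2 := ih (m - 2 * c) (by omega) (by omega)
      refine ⟨by linarith [h1.1, h2.1], fun ho => ?_⟩
      have h3 := h1.2 ho
      rw [h2.2 (by rw [Nat.odd_iff] at *; omega)] at h3
      linarith
    · simpa using h1

lemma good_base (N a : ℕ) (h : N < a) : Good N (signedGF a a) := by
  intro m hm
  have key : ∀ P : ℕ → ℕ → Prop, ∀ t ∈ pairSet P a a m, t.1 = 0 ∧ m = 0 := by
    rintro P ⟨g, s⟩ ⟨h1, h2, h3, -⟩
    simp only at h1 h2 h3
    have : 0 ≤ 2 * Multiset.card g * Multiset.card s := Nat.zero_le _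
    have hg : g = 0 := by
      apply Multiset.eq_zero_of_forall_notMem
      intro x hx
      have := (h1 x hx).1
      have := Multiset.single_le_sum (fun _ _ => Nat.zero_le _) x hx
      omega
    have hs : s = 0 := by
      apply Multiset.eq_zero_of_forall_notMem
      intro x hx
      have := (h2 x hx).1
      have := Multiset.single_le_sum (fun _ _ => Nat.zero_le _) x hx
      omega
    subst hg hs
    simp at h3
    exact ⟨rfl, h3.symm⟩
  have ho : pairSet (fun k _ => Odd k) a a m = ∅ := by
    apply Set.eq_empty_of_forall_notMem
    intro t ht
    have h4 := ht.2.2.2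
    rw [(key _ t ht).1] at h4
    simp at h4
  simp only [signedGF, PowerSeries.coeff_mk]
  rw [ho]
  refine ⟨by simp, fun hodd => ?_⟩
  have he : pairSet (fun k _ => Even k) a a m = ∅ := by
    apply Set.eq_empty_of_forall_notMem
    intro t ht
    rw [(key _ t ht).2] at hodd
    simp at hodd
  rw [he]; simp

lemma good_all (N : ℕ) : ∀ i a, 1 ≤ a → N < a + 2 * i → Good N (signedGF a a) := by
  intro i
  induction i with
  | zero => intro a _ h; exact good_base N a (by omega)
  | succ i ih =>
    intro a ha h
    apply good_div N a ha
    rw [signedGF_diag a ha]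
    exact good_mul _ _ _ (good_mul _ _ _ (ih (a+2) (by omega) (by omega)))

lemma cp_eq_pairSet (Q : ℕ → Prop) (a b n : ℕ) :
    {t ∈ cpSet a b 2 n | Q (Multiset.card t.1)}.ncard =
      (pairSet (fun k _ => Q k) a b n).ncard := by
  apply Set.ncard_congr (fun t _ => (t.1, t.2.2))
  · rintro ⟨g, r, s⟩ ⟨⟨⟨h1, h2, h3⟩, h4⟩, h5⟩
    refine ⟨h1, h2, ?_, h5⟩
    simp only at h3 h4 ⊢
    subst h3
    rw [Multiset.sum_replicate, smul_eq_mul] at h4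
    linarith
  · rintro ⟨g, r, s⟩ ⟨g', r', s'⟩ ⟨⟨⟨_, _, h⟩, _⟩, _⟩ ⟨⟨⟨_, _, h'⟩, _⟩, _⟩ he
    simp only [Prod.mk.injEq] at he h h' ⊢
    obtain ⟨rfl, rfl⟩ := he
    exact ⟨rfl, h.trans h'.symm, rfl⟩
  · rintro ⟨g, s⟩ ⟨h1, h2, h3, h4⟩
    refine ⟨(g, Multiset.replicate (Multiset.card s) (2 * Multiset.card g), s),
      ⟨⟨⟨h1, h2, rfl⟩, ?_⟩, h4⟩, rfl⟩
    simp only [Multiset.sum_replicate, smul_eq_mul] at h3 ⊢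
    linarith

theorem stmt0 (n : ℕ) :
    (Even n → cpOdd 1 1 2 n ≤ cpEven 1 1 2 n) ∧
    (Odd n → cpOdd 1 1 2 n = cpEven 1 1 2 n) := by
  have h := good_all n n 1 le_rfl (by omega) n le_rfl
  simp only [signedGF, PowerSeries.coeff_mk] at h
  unfold cpOdd cpEven
  rw [cp_eq_pairSet Odd, cp_eq_pairSet Even]
  refine ⟨fun _ => ?_, fun ho => ?_⟩
  · have := h.1
    omega
  · have := h.2 ho
    omega
end

section
/- For every nonnegative integer n, cp^e_{1,1,2}(n) − cp^o_{1,1,2}(n) equals the number of partitions π of n such that every part size of π other than the largest even part of π occurs an even number of times in π, and, if π has an even part, the largest even part of π occurs an odd number of times in π. -/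
/-- The largest even part of a partition (0 if there is no even part). -/
def largestEvenPart (lam : Multiset ℕ) : ℕ := (lam.filter (fun x => x % 2 = 0)).sup

/-- Weighted generating function of a set. -/
noncomputable def gf {α : Type} (S : Set α) (size : α → ℕ) (w : α → ℤ) : PowerSeries ℤ :=
  PowerSeries.mk fun n => ∑ᶠ t ∈ {t | t ∈ S ∧ size t = n}, w t

theorem gf_add {α : Type} (S A B : Set α) (size : α → ℕ) (w : α → ℤ)
    (hS : ∀ t, t ∈ S ↔ t ∈ A ∨ t ∈ B) (hd : ∀ t, t ∈ A → t ∉ B)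
    (hfin : ∀ n, {t | t ∈ S ∧ size t = n}.Finite) :
    gf S size w = gf A size w + gf B size w := by
  ext n
  simp only [gf, PowerSeries.coeff_mk, map_add]
  have hU : {t | t ∈ S ∧ size t = n} = {t | t ∈ A ∧ size t = n} ∪ {t | t ∈ B ∧ size t = n} := by
    ext t; simp only [Set.mem_ofPred_eq, Set.mem_union, hS]; tauto
  rw [hU]
  have h := hfin n
  rw [hU] at h
  apply finsum_mem_union
  · rw [Set.disjoint_left]; intro t h1 h2; exact hd t h1.1 h2.1
  · exact h.subset Set.subset_union_left
  · exact h.subset Set.subset_union_right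

theorem gf_bij {α β : Type} (S : Set α) (T : Set β) (size : α → ℕ) (size' : β → ℕ)
    (w : α → ℤ) (w' : β → ℤ) (d : ℕ) (c : ℤ) (f : α → β) (g : β → α)
    (hf : ∀ a ∈ S, f a ∈ T ∧ g (f a) = a ∧ size a = d + size' (f a) ∧ w a = c * w' (f a))
    (hg : ∀ b ∈ T, g b ∈ S ∧ f (g b) = b) :
    gf S size w = PowerSeries.C c * (PowerSeries.X ^ d * gf T size' w') := by
  ext n
  simp only [gf, PowerSeries.coeff_mk, PowerSeries.coeff_C_mul, PowerSeries.coeff_X_pow_mul']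
  split_ifs with hn
  · simp only [← smul_eq_mul, smul_finsum]
    · refine finsum_mem_eq_of_bijOn f ⟨?_, ?_, ?_⟩ ?_
      · intro a ha
        obtain ⟨h1, h2, h3, h4⟩ := hf a ha.1
        have := ha.2
        exact ⟨h1, by omega⟩
      · intro a ha b hb hab
        rw [← (hf a ha.1).2.1, ← (hf b hb.1).2.1, hab]
      · intro b hb
        obtain ⟨h1, h2⟩ := hg b hb.1
        refine ⟨g b, ⟨h1, ?_⟩, h2⟩
        have h3 := (hf _ h1).2.2.1
        have := hb.2
        rw [h2] at h3; omega
      · intro a ha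
        simpa using (hf a ha.1).2.2.2
  · have : {t | t ∈ S ∧ size t = n} = ∅ := by
      ext t
      simp only [Set.mem_ofPred_eq, Set.mem_empty_iff_false, iff_false, not_and]
      intro ht h
      have := (hf t ht).2.2.1
      omega
    rw [this]; simp

theorem gf_one {α : Type} (S : Set α) (size : α → ℕ) (w : α → ℤ) (e : α) (N : ℕ)
    (he : e ∈ S) (hs : size e = 0) (hw : w e = 1)
    (h : ∀ t ∈ S, t ≠ e → N ≤ size t) :
    (PowerSeries.X ^ N : PowerSeries ℤ) ∣ gf S size w - 1 := by
  rw [PowerSeries.X_pow_dvd_iff]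
  intro n hn
  simp only [gf, PowerSeries.coeff_mk, map_sub, PowerSeries.coeff_one]
  split_ifs with h0
  · have : {t | t ∈ S ∧ size t = n} = {e} := by
      ext t
      simp only [Set.mem_ofPred_eq, Set.mem_singleton_iff]
      constructor
      · rintro ⟨h1, h2⟩
        by_contra hne
        have := h t h1 hne
        omega
      · rintro rfl; exact ⟨he, by omega⟩
    rw [this]; simp [hw]
  · have : {t | t ∈ S ∧ size t = n} = ∅ := by
      ext t
      simp only [Set.mem_ofPred_eq, Set.mem_empty_iff_false, iff_false, not_and]
      intro ht h2
      by_cases hne : t = e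
      · subst hne; omega
      · have := h t ht hne; omega
    rw [this]; simp

theorem fin_pos (n : ℕ) : {s : Multiset ℕ | (∀ x ∈ s, 0 < x) ∧ s.sum ≤ n}.Finite := by
  have : {s : Multiset ℕ | (∀ x ∈ s, 0 < x) ∧ s.sum ≤ n} ⊆
      ⋃ k ∈ Set.Iic n, Set.range (fun p : Nat.Partition k => p.parts) := by
    rintro s ⟨h1, h2⟩
    simp only [Set.mem_iUnion]
    exact ⟨s.sum, h2, ⟨s, fun {i} hi => h1 i hi, rfl⟩, rfl⟩
  exact ((Set.finite_Iic n).biUnion fun k _ => Set.finite_range _).subset this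

theorem fin_card (n : ℕ) : {s : Multiset ℕ | s.sum + Multiset.card s ≤ n}.Finite := by
  refine Set.Finite.of_finite_image (f := fun s => s.map Nat.succ) ((fin_pos n).subset ?_) ?_
  · rintro _ ⟨s, hs, rfl⟩
    refine ⟨by simp, ?_⟩
    simpa [Nat.succ_eq_add_one, Multiset.sum_map_add] using hs
  · exact (Multiset.map_injective Nat.succ_injective).injOn

/-- Copartitions in half coordinates. -/
def cS (k l : ℕ) : Set (Multiset ℕ × Multiset ℕ) :=
  {t | (∀ x ∈ t.1, k ≤ x) ∧ ∀ x ∈ t.2, l ≤ x}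

/-- Size of a copartition in half coordinates. -/
def cSize (t : Multiset ℕ × Multiset ℕ) : ℕ :=
  2 * t.1.sum + Multiset.card t.1 + 2 * t.2.sum + Multiset.card t.2 +
    2 * (Multiset.card t.1 * Multiset.card t.2)

/-- Sign. -/
def cW (t : Multiset ℕ × Multiset ℕ) : ℤ := (-1) ^ Multiset.card t.1

theorem cS_fin (n : ℕ) : {t | cSize t ≤ n}.Finite := by
  refine ((fin_card n).prod (fin_card n)).subset ?_
  rintro ⟨γ, σ⟩ h
  simp only [Set.mem_ofPred_eq, cSize, Set.mem_prod] at *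
  constructor <;> omega

/-- gf of copartitions. -/
noncomputable def G (k l : ℕ) : PowerSeries ℤ := gf (cS k l) cSize cW

theorem pred_map (s : Multiset ℕ) (l : ℕ) (h : ∀ x ∈ s, l + 1 ≤ x) :
    (s.map (· - 1)).map (· + 1) = s := by
  rw [Multiset.map_map]
  conv_rhs => rw [← Multiset.map_id s]
  apply Multiset.map_congr rfl
  intro x hx
  have := h x hx
  simp; omega

theorem cS_finite (k l n : ℕ) : {t | t ∈ cS k l ∧ cSize t = n}.Finite :=
  (cS_fin n).subset fun _ h => h.2.le

theorem G_rec1 (k l : ℕ) :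
    G k l = G (k+1) l - PowerSeries.X ^ (2*k+1) * G k (l+1) := by
  have h1 := gf_add (cS k l) (cS (k+1) l) {t | t ∈ cS k l ∧ k ∈ t.1} cSize cW (by
      rintro ⟨γ, σ⟩
      simp only [cS, Set.mem_ofPred_eq]
      constructor
      · rintro ⟨h1, h2⟩
        by_cases hk : k ∈ γ
        · exact Or.inr ⟨⟨h1, h2⟩, hk⟩
        · refine Or.inl ⟨fun x hx => ?_, h2⟩
          have := h1 x hx
          have : x ≠ k := by rintro rfl; exact hk hx
          omega
      · rintro (⟨h1, h2⟩ | h)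
        · exact ⟨fun x hx => by have := h1 x hx; omega, h2⟩
        · exact h.1) (by
      rintro ⟨γ, σ⟩ h1 h2
      have := h1.1 k h2.2
      omega) (cS_finite k l)
  have h2 := gf_bij {t | t ∈ cS k l ∧ k ∈ t.1} (cS k (l+1)) cSize cSize cW cW (2*k+1) (-1)
    (fun t => (t.1.erase k, t.2.map (· + 1))) (fun t => (k ::ₘ t.1, t.2.map (· - 1))) (by
      rintro ⟨γ, σ⟩ ⟨⟨h1, h2⟩, h3⟩
      obtain ⟨γ, rfl⟩ := Multiset.exists_cons_of_mem h3
      refine ⟨⟨fun x hx => h1 x ?_, ?_⟩, ?_, ?_, ?_⟩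
      · simp at hx; simp [hx]
      · simpa using h2
      · simp
      · simp [cSize, Multiset.sum_map_add]; ring
      · simp [cW, pow_succ]) (by
      rintro ⟨γ, σ⟩ ⟨h1, h2⟩
      refine ⟨⟨⟨?_, ?_⟩, ?_⟩, ?_⟩
      · simpa using h1
      · simp only [Multiset.mem_map]
        rintro _ ⟨x, hx, rfl⟩
        have := h2 x hx
        omega
      · simp
      · simp only [Multiset.erase_cons_head, Prod.mk.injEq, true_and]
        exact pred_map σ l h2)
  unfold G
  rw [h1, h2]; simp; ring

theorem G_rec2 (k l : ℕ) :
    G k l = G k (l+1) + PowerSeries.X ^ (2*l+1) * G (k+1) l := by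
  have h1 := gf_add (cS k l) (cS k (l+1)) {t | t ∈ cS k l ∧ l ∈ t.2} cSize cW (by
      rintro ⟨γ, σ⟩
      simp only [cS, Set.mem_ofPred_eq]
      constructor
      · rintro ⟨h1, h2⟩
        by_cases hk : l ∈ σ
        · exact Or.inr ⟨⟨h1, h2⟩, hk⟩
        · refine Or.inl ⟨h1, fun x hx => ?_⟩
          have := h2 x hx
          have : x ≠ l := by rintro rfl; exact hk hx
          omega
      · rintro (⟨h1, h2⟩ | h)
        · exact ⟨h1, fun x hx => by have := h2 x hx; omega⟩
        · exact h.1) (by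
      rintro ⟨γ, σ⟩ h1 h2
      have := h1.2 l h2.2
      omega) (cS_finite k l)
  have h2 := gf_bij {t | t ∈ cS k l ∧ l ∈ t.2} (cS (k+1) l) cSize cSize cW cW (2*l+1) 1
    (fun t => (t.1.map (· + 1), t.2.erase l)) (fun t => (t.1.map (· - 1), l ::ₘ t.2)) (by
      rintro ⟨γ, σ⟩ ⟨⟨h1, h2⟩, h3⟩
      obtain ⟨σ, rfl⟩ := Multiset.exists_cons_of_mem h3
      refine ⟨⟨?_, fun x hx => h2 x ?_⟩, ?_, ?_, ?_⟩
      · simpa using h1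
      · simp at hx; simp [hx]
      · simp
      · simp [cSize, Multiset.sum_map_add]; ring
      · simp [cW]) (by
      rintro ⟨γ, σ⟩ ⟨h1, h2⟩
      refine ⟨⟨⟨?_, ?_⟩, ?_⟩, ?_⟩
      · simp only [Multiset.mem_map]
        rintro _ ⟨x, hx, rfl⟩
        have := h1 x hx
        omega
      · simpa using h2
      · simp
      · simp only [Multiset.erase_cons_head, Prod.mk.injEq, and_true]
        exact pred_map γ k h1)
  unfold G
  rw [h1, h2]; simp

theorem G_step (k : ℕ) :
    (1 - PowerSeries.X ^ (4*k+2)) * G k k =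
      (1 + PowerSeries.X ^ (4*k+2)) * (1 + PowerSeries.X ^ (4*k+4)) * G (k+1) (k+1) := by
  have a1 := G_rec1 k k
  have a2 := G_rec2 k k
  have b1 := G_rec1 (k+1) k
  have b2 := G_rec2 (k+1) k
  have a := G_rec1 k (k+1)
  have b := G_rec2 k (k+1)
  have e1 : (PowerSeries.X : PowerSeries ℤ) ^ (4*k+2) = PowerSeries.X ^ (2*k+1) * PowerSeries.X ^ (2*k+1) := by
    rw [← pow_add]; congr 1; ring
  have e2 : (PowerSeries.X : PowerSeries ℤ) ^ (4*k+4) = PowerSeries.X ^ (2*(k+1)+1) * PowerSeries.X ^ (2*k+1) := by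
    rw [← pow_add]; congr 1; ring
  rw [e1, e2]
  generalize (PowerSeries.X : PowerSeries ℤ) ^ (2*k+1) = x at *
  generalize (PowerSeries.X : PowerSeries ℤ) ^ (2*(k+1)+1) = y at *
  generalize G k k = g at *
  have h1 : (1 + x) * g = (1 + x * x) * G (k+1) k := by linear_combination a1 + x * a2
  have h2 : (1 - x) * G (k+1) k = (1 + y * x) * G (k+1) (k+1) := by
    linear_combination b2 - x * b1
  linear_combination (1 - x) * h1 + (1 + x * x) * h2

theorem card_pos' (s : Multiset ℕ) (h : s ≠ 0) : 1 ≤ Multiset.card s :=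
  Multiset.card_pos.2 h

theorem sum_ge (s : Multiset ℕ) (N : ℕ) (h0 : s ≠ 0) (h : ∀ x ∈ s, N ≤ x) : N ≤ s.sum := by
  obtain ⟨x, hx⟩ := Multiset.exists_mem_of_ne_zero h0
  exact (h x hx).trans (Multiset.le_sum_of_mem hx)

theorem G_one (N : ℕ) : (PowerSeries.X ^ N : PowerSeries ℤ) ∣ G N N - 1 := by
  apply gf_one _ _ _ (0, 0)
  · simp [cS]
  · simp [cSize]
  · simp [cW]
  · rintro ⟨γ, σ⟩ ⟨h1, h2⟩ hne
    simp only [cSize]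
    by_cases hγ : γ = 0
    · have : σ ≠ 0 := by rintro rfl; exact hne (by rw [hγ])
      have := sum_ge σ N this h2
      omega
    · have := sum_ge γ N hγ h1
      omega

/-- Triples encoding the partitions. -/
def rS (a : ℕ) : Set (Multiset ℕ × ℕ × Multiset ℕ) :=
  {t | (∀ x ∈ t.1, a ≤ x) ∧ ∀ x ∈ t.2.2, 0 < x ∧ x ≤ t.2.1}

/-- Size of triples. -/
def rSize (k : ℕ) (t : Multiset ℕ × ℕ × Multiset ℕ) : ℕ :=
  2 * (2 * t.1.sum + Multiset.card t.1) + 2 * t.2.1 * (2 * k + 1) + 4 * t.2.2.sum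

/-- gf of triples. -/
noncomputable def R (a k : ℕ) : PowerSeries ℤ := gf (rS a) (rSize k) (fun _ => 1)

theorem rS_fin (a k n : ℕ) : {t | t ∈ rS a ∧ rSize k t = n}.Finite := by
  refine ((fin_card n).prod ((Set.finite_Iic n).prod (fin_pos n))).subset ?_
  rintro ⟨ω, m, μ⟩ ⟨⟨h1, h2⟩, h⟩
  simp only [rSize] at h
  simp only [Set.mem_ofPred_eq, Set.mem_prod, Set.mem_Iic]
  have : 2 * m * (2 * k + 1) = 4 * (m * k) + 2 * m := by ring
  refine ⟨by omega, by omega, fun x hx => (h2 x hx).1, by omega⟩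

theorem R_rec1 (a k : ℕ) : (1 - PowerSeries.X ^ (4*a+2)) * R a k = R (a+1) k := by
  have h1 := gf_add (rS a) (rS (a+1)) {t | t ∈ rS a ∧ a ∈ t.1} (rSize k) (fun _ => 1) (by
      rintro ⟨γ, σ⟩
      simp only [rS, Set.mem_ofPred_eq]
      constructor
      · rintro ⟨h1, h2⟩
        by_cases hk : a ∈ γ
        · exact Or.inr ⟨⟨h1, h2⟩, hk⟩
        · refine Or.inl ⟨fun x hx => ?_, h2⟩
          have := h1 x hx
          have : x ≠ a := by rintro rfl; exact hk hx
          omega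
      · rintro (⟨h1, h2⟩ | h)
        · exact ⟨fun x hx => by have := h1 x hx; omega, h2⟩
        · exact h.1) (by
      rintro ⟨γ, σ⟩ h1 h2
      have := h1.1 a h2.2
      omega) (rS_fin a k)
  have h2 := gf_bij {t | t ∈ rS a ∧ a ∈ t.1} (rS a) (rSize k) (rSize k) (fun _ => 1) (fun _ => 1)
    (4*a+2) 1 (fun t => (t.1.erase a, t.2)) (fun t => (a ::ₘ t.1, t.2)) (by
      rintro ⟨γ, σ⟩ ⟨⟨h1, h2⟩, h3⟩
      obtain ⟨γ, rfl⟩ := Multiset.exists_cons_of_mem h3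
      refine ⟨⟨fun x hx => h1 x ?_, h2⟩, ?_, ?_, ?_⟩
      · simp at hx; simp [hx]
      · simp
      · simp [rSize]; ring
      · simp) (by
      rintro ⟨γ, σ⟩ ⟨h1, h2⟩
      refine ⟨⟨⟨?_, h2⟩, ?_⟩, ?_⟩
      · simpa using h1
      · simp
      · simp)
  unfold R
  simp only [map_one, one_mul] at h2
  linear_combination h1 + h2

theorem R_rec2 (a k : ℕ) : (1 - PowerSeries.X ^ (4*k+2)) * R a k = R a (k+1) := by
  have h1 := gf_add (rS a) {t | t ∈ rS a ∧ (t.2.1 = 0 ∨ t.2.1 ∈ t.2.2)}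
    {t | t ∈ rS a ∧ t.2.1 ≠ 0 ∧ t.2.1 ∉ t.2.2} (rSize k) (fun _ => 1) (by
      intro t
      simp only [Set.mem_ofPred_eq]
      tauto) (by
      intro t
      simp only [Set.mem_ofPred_eq]
      tauto) (rS_fin a k)
  have h2 := gf_bij {t | t ∈ rS a ∧ t.2.1 ≠ 0 ∧ t.2.1 ∉ t.2.2} (rS a) (rSize k) (rSize k)
    (fun _ => 1) (fun _ => 1)
    (4*k+2) 1 (fun t => (t.1, t.2.1 - 1, t.2.2)) (fun t => (t.1, t.2.1 + 1, t.2.2)) (by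
      rintro ⟨ω, m, μ⟩ ⟨⟨h1, h2⟩, h3, h4⟩
      simp only at h1 h2 h3 h4
      obtain ⟨m, rfl⟩ := Nat.exists_eq_succ_of_ne_zero h3
      refine ⟨⟨h1, fun x hx => ?_⟩, ?_, ?_, ?_⟩
      · have := h2 x hx
        have : x ≠ m.succ := by rintro rfl; exact h4 hx
        simp only at *
        omega
      · simp
      · simp [rSize]; ring
      · simp) (by
      rintro ⟨ω, m, μ⟩ ⟨h1, h2⟩
      refine ⟨⟨⟨h1, fun x hx => ?_⟩, ?_, fun hm => ?_⟩, ?_⟩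
      · have := h2 x hx
        simp only at *
        omega
      · simp
      · have := h2 _ hm
        simp only at *
        omega
      · simp)
  have h3 := gf_bij {t | t ∈ rS a ∧ (t.2.1 = 0 ∨ t.2.1 ∈ t.2.2)} (rS a) (rSize k) (rSize (k+1))
    (fun _ => 1) (fun _ => 1)
    0 1 (fun t => (t.1, t.2.1, t.2.2.erase t.2.1))
      (fun t => (t.1, t.2.1, if t.2.1 = 0 then t.2.2 else t.2.1 ::ₘ t.2.2)) (by
      rintro ⟨ω, m, μ⟩ ⟨⟨h1, h2⟩, h3⟩
      simp only at h1 h2 h3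
      have hz : m = 0 → μ = 0 := by
        rintro rfl
        apply Multiset.eq_zero_of_forall_notMem
        intro x hx
        have := h2 x hx
        omega
      refine ⟨⟨h1, fun x hx => ?_⟩, ?_, ?_, ?_⟩
      · exact h2 x (Multiset.mem_of_mem_erase hx)
      · by_cases hm : m = 0
        · simp [hm, hz hm]
        · simp [hm, Multiset.cons_erase (h3.resolve_left hm)]
      · by_cases hm : m = 0
        · simp [hm, hz hm, rSize]
        · obtain ⟨μ, rfl⟩ := Multiset.exists_cons_of_mem (h3.resolve_left hm)
          simp [rSize]; ring
      · simp) (by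
      rintro ⟨ω, m, μ⟩ ⟨h1, h2⟩
      simp only at h1 h2
      by_cases hm : m = 0
      · refine ⟨⟨⟨h1, ?_⟩, ?_⟩, ?_⟩
        · simpa [hm] using h2
        · simp [hm]
        · have : (0:ℕ) ∉ μ := fun h => by have := h2 _ h; omega
          simp [hm, this]
      · refine ⟨⟨⟨h1, ?_⟩, ?_⟩, ?_⟩
        · simp only [hm, if_false, Multiset.mem_cons]
          rintro x (rfl | hx)
          · omega
          · exact h2 x hx
        · simp [hm]
        · simp [hm])
  unfold R
  simp only [map_one, one_mul, pow_zero] at h2 h3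
  linear_combination h1 + h2 + h3

theorem R_one (N : ℕ) : (PowerSeries.X ^ N : PowerSeries ℤ) ∣ R N N - 1 := by
  apply gf_one _ _ _ (0, 0, 0)
  · simp [rS]
  · simp [rSize]
  · simp
  · rintro ⟨ω, m, μ⟩ ⟨h1, h2⟩ hne
    simp only at h1 h2
    simp only [rSize]
    have : 2 * m * (2 * N + 1) = 4 * (m * N) + 2 * m := by ring
    by_cases hγ : ω = 0
    · have hm : m ≠ 0 := by
        rintro rfl
        apply hne
        have : μ = 0 := by
          apply Multiset.eq_zero_of_forall_notMem
          intro x hx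
          have := h2 x hx
          omega
        rw [hγ, this]
      have : N ≤ m * N := Nat.le_mul_of_pos_left N (by omega)
      omega
    · have := sum_ge ω N hγ h1
      omega

/-- Finite product. -/
noncomputable def pA (N : ℕ) : PowerSeries ℤ :=
  ∏ k ∈ Finset.range N, (1 - PowerSeries.X ^ (4*k+2))
/-- Finite product. -/
noncomputable def pB (N : ℕ) : PowerSeries ℤ :=
  ∏ k ∈ Finset.range N, ((1 + PowerSeries.X ^ (4*k+2)) * (1 + PowerSeries.X ^ (4*k+4)))
/-- Finite product. -/
noncomputable def pD (N : ℕ) : PowerSeries ℤ :=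
  ∏ k ∈ Finset.range N, (1 - PowerSeries.X ^ (4*k+4))

theorem G_prod (N : ℕ) : pA N * G 0 0 = pB N * G N N := by
  induction N with
  | zero => simp [pA, pB]
  | succ N ih =>
    have h := G_step N
    rw [pA, pB, Finset.prod_range_succ, Finset.prod_range_succ, ← pA, ← pB]
    linear_combination (1 - PowerSeries.X ^ (4*N+2)) * ih + pB N * h

theorem R_prod1 (N : ℕ) : pA N * R 0 0 = R N 0 := by
  induction N with
  | zero => simp [pA]
  | succ N ih =>
    have h := R_rec1 N 0
    rw [pA, Finset.prod_range_succ, ← pA]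
    linear_combination (1 - PowerSeries.X ^ (4*N+2)) * ih + h

theorem R_prod2 (a N : ℕ) : pA N * R a 0 = R a N := by
  induction N with
  | zero => simp [pA]
  | succ N ih =>
    have h := R_rec2 a N
    rw [pA, Finset.prod_range_succ, ← pA]
    linear_combination (1 - PowerSeries.X ^ (4*N+2)) * ih + h

theorem ABD (N : ℕ) : pA N * pB N * pD N = pD (2 * N) := by
  induction N with
  | zero => simp [pA, pB, pD]
  | succ N ih =>
    rw [show 2 * (N + 1) = 2 * N + 1 + 1 by ring, pA, pB, pD, pD]
    simp only [Finset.prod_range_succ]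
    rw [← pA, ← pB, ← pD, ← pD, ← ih]
    ring

theorem unit_of (f : PowerSeries ℤ) (h : PowerSeries.constantCoeff f = 1) : IsUnit f := by
  rw [PowerSeries.isUnit_iff_constantCoeff, h]; exact isUnit_one

theorem unit_pA (N : ℕ) : IsUnit (pA N) := by
  apply unit_of; simp [pA, map_prod]

theorem unit_pD (N : ℕ) : IsUnit (pD N) := by
  apply unit_of; simp [pD, map_prod]

theorem D_mod (N M : ℕ) : (PowerSeries.X ^ N : PowerSeries ℤ) ∣ pD (N + M) - pD N := by
  induction M with
  | zero => simp
  | succ M ih =>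
    rw [← add_assoc, pD, Finset.prod_range_succ, ← pD]
    have : (PowerSeries.X ^ N : PowerSeries ℤ) ∣ PowerSeries.X ^ (4*(N+M)+4) :=
      pow_dvd_pow _ (by omega)
    have h := dvd_sub ih (Dvd.dvd.mul_left this (pD (N+M)))
    convert h using 1
    ring

theorem AB_mod (N : ℕ) : (PowerSeries.X ^ N : PowerSeries ℤ) ∣ pA N * pB N - 1 := by
  have h := D_mod N N
  rw [← two_mul, ← ABD] at h
  rw [show pA N * pB N * pD N - pD N = (pA N * pB N - 1) * pD N by ring] at h
  exact (unit_pD N).dvd_mul_right.1 h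

theorem G_eq_R : G 0 0 = R 0 0 := by
  have key : ∀ N, (PowerSeries.X ^ N : PowerSeries ℤ) ∣ G 0 0 - R 0 0 := by
    intro N
    have h1 := G_prod N
    have h2 := R_prod2 N N
    rw [← R_prod1] at h2
    have h3 := dvd_sub (dvd_add (Dvd.dvd.mul_left (G_one N) (pA N * pB N)) (AB_mod N)) (R_one N)
    rw [← h2] at h3
    have : (PowerSeries.X ^ N : PowerSeries ℤ) ∣ (pA N * pA N) * (G 0 0 - R 0 0) := by
      convert h3 using 1
      linear_combination pA N * h1
    exact ((unit_pA N).mul (unit_pA N)).dvd_mul_left.1 this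
  ext n
  have := PowerSeries.X_pow_dvd_iff.1 (key (n+1)) n (by omega)
  rw [map_sub] at this
  linarith

theorem sum_two (s : Multiset ℕ) : (s.map (fun x => 2 * x)).sum = 2 * s.sum := by
  simpa using Multiset.sum_map_mul_left (s := s) (a := 2) (f := fun x : ℕ => x)

theorem coeff_G (n : ℕ) :
    PowerSeries.coeff n (G 0 0) = (cpEven 1 1 2 n : ℤ) - (cpOdd 1 1 2 n : ℤ) := by
  set f : Multiset ℕ × Multiset ℕ → Multiset ℕ × Multiset ℕ × Multiset ℕ := fun t =>
    (t.1.map (2 * · + 1), Multiset.replicate (Multiset.card t.2) (2 * Multiset.card t.1),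
      t.2.map (2 * · + 1)) with hf
  have hinj : Function.Injective f := by
    rintro ⟨a, b⟩ ⟨c, d⟩ h
    simp only [hf, Prod.mk.injEq] at h
    have hi : Function.Injective (fun x : ℕ => 2 * x + 1) := fun x y h => by
      simp only at h; omega
    rw [Multiset.map_injective hi h.1, Multiset.map_injective hi h.2.2]
  have hsz : ∀ t, (f t).1.sum + (f t).2.1.sum + (f t).2.2.sum = cSize t := by
    rintro ⟨a, b⟩
    simp [hf, cSize, Multiset.sum_map_add, sum_two]
    ring
  have hodd : ∀ s : Multiset ℕ, (∀ x ∈ s, 1 ≤ x ∧ x % 2 = 1 % 2) →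
      (s.map (· / 2)).map (2 * · + 1) = s := by
    intro s hs
    rw [Multiset.map_map]
    conv_rhs => rw [← Multiset.map_id s]
    apply Multiset.map_congr rfl
    intro x hx
    have := hs x hx
    simp only [Function.comp, id]; omega
  have himg : ∀ p : ℕ → Prop, {t ∈ cpSet 1 1 2 n | p (Multiset.card t.1)} =
      Set.image f {t | cSize t = n ∧ p (Multiset.card t.1)} := by
    intro p
    ext t
    constructor
    · obtain ⟨γ, ρ, σ⟩ := t
      rintro ⟨⟨⟨h1, h2, h3⟩, h4⟩, h5⟩
      simp only at h1 h2 h3 h4 h5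
      have he : f (γ.map (· / 2), σ.map (· / 2)) = (γ, ρ, σ) := by
        simp only [hf, hodd γ h1, hodd σ h2, Multiset.card_map, h3]
      refine ⟨_, ⟨?_, ?_⟩, he⟩
      · rw [← hsz, he]; exact h4
      · simpa using h5
    · rintro ⟨⟨a, b⟩, ⟨h1, h2⟩, rfl⟩
      refine ⟨⟨⟨?_, ?_, ?_⟩, ?_⟩, ?_⟩
      · simp only [hf, Multiset.mem_map]
        rintro _ ⟨x, -, rfl⟩
        omega
      · simp only [hf, Multiset.mem_map]
        rintro _ ⟨x, -, rfl⟩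
        omega
      · simp [hf]
      · rw [hsz]; exact h1
      · simpa [hf] using h2
  have hfin : ∀ p : ℕ → Prop, {t | cSize t = n ∧ p (Multiset.card t.1)}.Finite := fun p =>
    (cS_fin n).subset fun _ h => h.1.le
  have hE : (cpEven 1 1 2 n : ℤ) = ∑ᶠ t ∈ {t | cSize t = n ∧ Even (Multiset.card t.1)}, cW t := by
    rw [cpEven, himg Even, Set.ncard_image_of_injective _ hinj]
    rw [finsum_mem_congr rfl (g := fun _ => (1:ℤ)) (fun t ht => by exact ht.2.neg_one_pow)]
    rw [finsum_mem_eq_finite_toFinset_sum _ (hfin Even), Set.ncard_eq_toFinset_card _ (hfin Even)]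
    simp
  have hO : (cpOdd 1 1 2 n : ℤ) = - ∑ᶠ t ∈ {t | cSize t = n ∧ Odd (Multiset.card t.1)}, cW t := by
    rw [cpOdd, himg Odd, Set.ncard_image_of_injective _ hinj]
    rw [finsum_mem_congr rfl (g := fun _ => (-1:ℤ)) (fun t ht => by exact ht.2.neg_one_pow)]
    rw [finsum_mem_eq_finite_toFinset_sum _ (hfin Odd), Set.ncard_eq_toFinset_card _ (hfin Odd)]
    simp
  rw [hE, hO, sub_neg_eq_add, ← finsum_mem_union _ (hfin _) (hfin _)]
  · simp only [G, gf, PowerSeries.coeff_mk]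
    refine finsum_mem_congr ?_ fun _ _ => rfl
    ext t
    · simp only [Set.mem_union, Set.mem_ofPred_eq, cS]
      have := Nat.even_or_odd (Multiset.card t.1)
      simp; tauto
  · rw [Set.disjoint_left]
    intro t h1 h2
    exact (Nat.not_even_iff_odd.2 h2.2) h1.2

theorem even_counts (s : Multiset ℕ) (h : ∀ x, Even (s.count x)) : ∃ v, s = v + v := by
  refine ⟨∑ x ∈ s.toFinset, (s.count x / 2) • {x}, ?_⟩
  ext y
  rw [Multiset.count_add, Multiset.count_sum']
  simp only [Multiset.count_nsmul, Multiset.count_singleton, mul_ite, mul_one, mul_zero,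
    Finset.sum_ite_eq, Multiset.mem_toFinset]
  split_ifs with hy
  · have := h y
    rw [Nat.even_iff] at this
    omega
  · simp [Multiset.count_eq_zero_of_notMem hy]

/-- doubled part -/
def dbl (ω μ : Multiset ℕ) : Multiset ℕ := ω.map (2 * · + 1) + μ.map (2 * ·)

/-- decode a triple -/
def dec (t : Multiset ℕ × ℕ × Multiset ℕ) : Multiset ℕ :=
  (if t.2.1 = 0 then 0 else {2 * t.2.1}) + (dbl t.1 t.2.2 + dbl t.1 t.2.2)

theorem dbl_inj {a b c d : Multiset ℕ} (h : dbl a b = dbl c d) : a = c ∧ b = d := by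
  have hi : Function.Injective (fun x : ℕ => 2 * x + 1) := fun x y h => by
    simp only at h; omega
  have hj : Function.Injective (fun x : ℕ => 2 * x) := fun x y h => by
    simp only at h; omega
  constructor
  · ext x
    have := congrArg (Multiset.count (2 * x + 1)) h
    simp only [dbl, Multiset.count_add] at this
    rw [Multiset.count_map_eq_count' (fun x : ℕ => 2 * x + 1) _ hi,
      Multiset.count_map_eq_count' (fun x : ℕ => 2 * x + 1) _ hi,
      Multiset.count_eq_zero_of_notMem (s := b.map _), Multiset.count_eq_zero_of_notMem (s := d.map _)] at this
    · simpa using this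
    · simp only [Multiset.mem_map]; rintro ⟨y, -, h⟩; omega
    · simp only [Multiset.mem_map]; rintro ⟨y, -, h⟩; omega
  · ext x
    have := congrArg (Multiset.count (2 * x)) h
    simp only [dbl, Multiset.count_add] at this
    rw [Multiset.count_map_eq_count' (fun x : ℕ => 2 * x) _ hj,
      Multiset.count_map_eq_count' (fun x : ℕ => 2 * x) _ hj,
      Multiset.count_eq_zero_of_notMem (s := a.map _), Multiset.count_eq_zero_of_notMem (s := c.map _)] at this
    · simpa using this
    · simp only [Multiset.mem_map]; rintro ⟨y, -, h⟩; omega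
    · simp only [Multiset.mem_map]; rintro ⟨y, -, h⟩; omega

theorem mem_dbl (a b : Multiset ℕ) (x : ℕ) :
    x ∈ dbl a b ↔ (∃ y ∈ a, 2 * y + 1 = x) ∨ ∃ y ∈ b, 2 * y = x := by
  simp [dbl]

theorem mem_dec (t : Multiset ℕ × ℕ × Multiset ℕ) (x : ℕ) :
    x ∈ dec t ↔ (t.2.1 ≠ 0 ∧ x = 2 * t.2.1) ∨ x ∈ dbl t.1 t.2.2 := by
  simp only [dec, Multiset.mem_add, or_self]
  split_ifs with h <;> simp [h]

theorem lep_dec (t : Multiset ℕ × ℕ × Multiset ℕ) (ht : t ∈ rS 0) :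
    largestEvenPart (dec t) = 2 * t.2.1 := by
  apply le_antisymm
  · apply Multiset.sup_le.2
    intro x hx
    rw [Multiset.mem_filter, mem_dec, mem_dbl] at hx
    obtain ⟨⟨-, h⟩ | ⟨y, -, h⟩ | ⟨y, hy, h⟩, h2⟩ := hx
    · omega
    · omega
    · have := ht.2 y hy
      omega
  · by_cases h0 : t.2.1 = 0
    · simp [h0]
    · apply Multiset.le_sup
      rw [Multiset.mem_filter, mem_dec]
      exact ⟨Or.inl ⟨h0, rfl⟩, by omega⟩

theorem count_dec (t : Multiset ℕ × ℕ × Multiset ℕ) (x : ℕ) :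
    (dec t).count x = (if t.2.1 ≠ 0 ∧ x = 2 * t.2.1 then 1 else 0) +
      ((dbl t.1 t.2.2).count x + (dbl t.1 t.2.2).count x) := by
  simp only [dec, Multiset.count_add]
  congr 1
  by_cases h : t.2.1 = 0 <;> simp [h, Multiset.count_singleton]

theorem sum_dec (t : Multiset ℕ × ℕ × Multiset ℕ) : (dec t).sum = rSize 0 t := by
  obtain ⟨ω, m, μ⟩ := t
  simp only [dec, dbl, rSize, Multiset.sum_add, Multiset.sum_map_add, sum_two]
  by_cases h : m = 0 <;> simp [h] <;> ring

theorem coeff_R (n : ℕ) :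
    PowerSeries.coeff n (R 0 0) = ({lam : Multiset ℕ | (∀ x ∈ lam, 0 < x) ∧ lam.sum = n ∧
        (∀ x ∈ lam, x ≠ largestEvenPart lam → Even (lam.count x)) ∧
        ((∃ x ∈ lam, Even x) → Odd (lam.count (largestEvenPart lam)))}).ncard := by
  have hset : {lam : Multiset ℕ | (∀ x ∈ lam, 0 < x) ∧ lam.sum = n ∧
        (∀ x ∈ lam, x ≠ largestEvenPart lam → Even (lam.count x)) ∧
        ((∃ x ∈ lam, Even x) → Odd (lam.count (largestEvenPart lam)))} =
      Set.image dec {t | t ∈ rS 0 ∧ rSize 0 t = n} := by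
    ext lam
    constructor
    · rintro ⟨h1, h2, h3, h4⟩
      set L := largestEvenPart lam with hL
      have hLe : ∀ x ∈ lam, Even x → x ≤ L := fun x hx he =>
        Multiset.le_sup (Multiset.mem_filter.2 ⟨hx, Nat.even_iff.1 he⟩)
      have hL0 : (¬ ∃ x ∈ lam, Even x) → L = 0 := by
        intro h
        apply Nat.le_zero.1
        apply Multiset.sup_le.2
        intro x hx
        rw [Multiset.mem_filter] at hx
        exact absurd ⟨x, hx.1, Nat.even_iff.2 hx.2⟩ h
      have hLeven : Even L := by
        by_contra hodd
        have hlt : L ≤ L - 1 := by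
          apply Multiset.sup_le.2
          intro x hx
          rw [Multiset.mem_filter] at hx
          have h5 := hLe x hx.1 (Nat.even_iff.2 hx.2)
          have : x ≠ L := by rintro rfl; exact hodd (Nat.even_iff.2 hx.2)
          omega
        have : L = 0 := by omega
        exact hodd (this ▸ Even.zero)
      have hLpos : (∃ x ∈ lam, Even x) → L ≠ 0 := by
        rintro ⟨x, hx, he⟩
        have := hLe x hx he
        have := h1 x hx
        omega
      obtain ⟨ν, hν⟩ : ∃ ν, lam = (if L / 2 = 0 then 0 else {2 * (L / 2)}) + (ν + ν) := by
        have h2L : 2 * (L / 2) = L := Nat.two_mul_div_two_of_even hLeven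
        by_cases hex : ∃ x ∈ lam, Even x
        · have hne : L / 2 ≠ 0 := by have := hLpos hex; omega
          have hc := h4 hex
          have hm : L ∈ lam := Multiset.count_pos.1 hc.pos
          obtain ⟨ν, hν⟩ := even_counts (lam.erase L) (by
            intro x
            by_cases hx : x = L
            · subst hx
              rw [Multiset.count_erase_self]
              rw [Nat.odd_iff] at hc
              rw [Nat.even_iff]
              omega
            · rw [Multiset.count_erase_of_ne hx]
              by_cases hxm : x ∈ lam
              · exact h3 x hxm hx
              · simp [Multiset.count_eq_zero_of_notMem hxm])
          refine ⟨ν, ?_⟩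
          rw [if_neg hne, h2L, ← hν, Multiset.singleton_add, Multiset.cons_erase hm]
        · have h0 := hL0 hex
          obtain ⟨ν, hν⟩ := even_counts lam (by
            intro x
            by_cases hxm : x ∈ lam
            · exact h3 x hxm (by have := h1 x hxm; omega)
            · simp [Multiset.count_eq_zero_of_notMem hxm])
          exact ⟨ν, by simp [h0]; exact hν⟩
      have hνm : ∀ x ∈ ν, x ∈ lam := fun x hx => by rw [hν]; simp [hx]
      have hd : dbl ((ν.filter (fun x => ¬ Even x)).map (· / 2)) ((ν.filter (fun x => Even x)).map (· / 2)) = ν := by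
        rw [dbl, Multiset.map_map, Multiset.map_map]
        conv_rhs => rw [← Multiset.filter_add_not (fun x => Even x) ν, add_comm]
        congr 1
        · conv_rhs => rw [← Multiset.map_id (Multiset.filter _ _)]
          apply Multiset.map_congr rfl
          intro x hx
          have := (Multiset.mem_filter.1 hx).2
          rw [Nat.even_iff] at this
          simp only [Function.comp, id]; omega
        · conv_rhs => rw [← Multiset.map_id (Multiset.filter _ _)]
          apply Multiset.map_congr rfl
          intro x hx
          have := (Multiset.mem_filter.1 hx).2
          rw [Nat.even_iff] at this
          simp only [Function.comp, id]; omega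
      have hdec : dec ((ν.filter (fun x => ¬ Even x)).map (· / 2), L / 2,
          (ν.filter (fun x => Even x)).map (· / 2)) = lam := by
        rw [dec]
        simp only [hd]
        exact hν.symm
      refine ⟨_, ⟨⟨by simp, ?_⟩, ?_⟩, hdec⟩
      · simp only [Multiset.mem_map]
        rintro _ ⟨x, hx, rfl⟩
        obtain ⟨hx, he⟩ := Multiset.mem_filter.1 hx
        have a1 := hLe x (hνm x hx) he
        have a2 := h1 x (hνm x hx)
        rw [Nat.even_iff] at he
        omega
      · rw [← sum_dec, hdec]; exact h2
    · rintro ⟨t, ⟨ht, hn⟩, rfl⟩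
      refine ⟨?_, ?_, ?_, ?_⟩
      · intro x hx
        rw [mem_dec, mem_dbl] at hx
        obtain ⟨h0, h⟩ | ⟨y, -, h⟩ | ⟨y, hy, h⟩ := hx
        · omega
        · omega
        · have := ht.2 y hy
          omega
      · rw [sum_dec, hn]
      · intro x hx hne
        rw [lep_dec t ht] at hne
        rw [count_dec, if_neg (by tauto)]
        simp
      · rintro ⟨x, hx, he⟩
        have h0 : t.2.1 ≠ 0 := by
          rw [mem_dec, mem_dbl] at hx
          rw [Nat.even_iff] at he
          obtain ⟨h0, h⟩ | ⟨y, -, h⟩ | ⟨y, hy, h⟩ := hx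
          · exact h0
          · omega
          · have := ht.2 y hy
            omega
        rw [lep_dec t ht, count_dec, if_pos ⟨h0, rfl⟩, Nat.odd_iff]
        omega
  have hinj : Set.InjOn dec {t | t ∈ rS 0 ∧ rSize 0 t = n} := by
    rintro ⟨a, b, c⟩ h1 ⟨a', b', c'⟩ h2 h
    have hb : b = b' := by
      have e1 := lep_dec _ h1.1
      have e2 := lep_dec _ h2.1
      rw [h] at e1
      simp only at e1 e2
      omega
    subst hb
    have : dbl a c = dbl a' c' := by
      ext x
      have := congrArg (Multiset.count x) h
      rw [count_dec, count_dec] at this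
      simp only at this
      omega
    obtain ⟨rfl, rfl⟩ := dbl_inj this
    rfl
  rw [hset, Set.ncard_image_of_injOn hinj]
  simp only [R, gf, PowerSeries.coeff_mk]
  rw [finsum_mem_eq_finite_toFinset_sum _ (rS_fin 0 0 n), Set.ncard_eq_toFinset_card _ (rS_fin 0 0 n)]
  simp

theorem stmt11 (n : ℕ) :
    (cpEven 1 1 2 n : ℤ) - (cpOdd 1 1 2 n : ℤ) =
      ({lam : Multiset ℕ | (∀ x ∈ lam, 0 < x) ∧ lam.sum = n ∧
        (∀ x ∈ lam, x ≠ largestEvenPart lam → Even (lam.count x)) ∧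
        ((∃ x ∈ lam, Even x) → Odd (lam.count (largestEvenPart lam)))}).ncard := by
  rw [← coeff_G, G_eq_R, coeff_R]
end

section
/- For every positive integer n, let D_0(n) be the number of overpartitions (λ,S) of size n such that every even part of λ is less than every odd part of λ, every part size of λ other than the largest even part occurs an even number of times in λ, and either λ has no even part, or the largest even part of λ occurs an odd number of times and is ≡ 0 (mod 4); let D_2(n) be the number of overpartitions (λ,S) of size n such that every even part of λ is less than every odd part of λ, every part size of λ other than the largest even part occurs an even number of times in λ, and λ has an even part whose largest even part occurs an odd number of times and is ≡ 2 (mod 4). Then D_0(n) = D_2(n) if n is not divisible by 4, and D_0(n) ≥ D_2(n) if n is divisible by 4. -/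
/-- `D_0(n)` (Chern's `\overline{EO}*_0(n)`): the number of overpartitions `(λ, S)` of size
`n` such that every even part of `λ` is less than every odd part, every part size other
than the largest even part occurs an even number of times, and either `λ` has no even
part, or its largest even part occurs an odd number of times and is `≡ 0 (mod 4)`. -/
noncomputable def D0 (n : ℕ) : ℕ :=
  ({op : Multiset ℕ × Finset ℕ |
     (∀ x ∈ op.1, 0 < x) ∧ op.1.sum = n ∧ op.2 ⊆ op.1.toFinset ∧
     (∀ x ∈ op.1, ∀ y ∈ op.1, Even x → Odd y → x < y) ∧
     (∀ x ∈ op.1, x ≠ largestEvenPart op.1 → Even (op.1.count x)) ∧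
     ((¬ ∃ x ∈ op.1, Even x) ∨
       (Odd (op.1.count (largestEvenPart op.1)) ∧ largestEvenPart op.1 % 4 = 0))}).ncard

/-- `D_2(n)` (Chern's `\overline{EO}*_2(n)`): as `D_0(n)`, except that `λ` must have an
even part and its largest even part occurs an odd number of times and is `≡ 2 (mod 4)`. -/
noncomputable def D2 (n : ℕ) : ℕ :=
  ({op : Multiset ℕ × Finset ℕ |
     (∀ x ∈ op.1, 0 < x) ∧ op.1.sum = n ∧ op.2 ⊆ op.1.toFinset ∧
     (∀ x ∈ op.1, ∀ y ∈ op.1, Even x → Odd y → x < y) ∧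
     (∀ x ∈ op.1, x ≠ largestEvenPart op.1 → Even (op.1.count x)) ∧
     (∃ x ∈ op.1, Even x) ∧
     Odd (op.1.count (largestEvenPart op.1)) ∧ largestEvenPart op.1 % 4 = 2}).ncard

namespace EO
section Alg
variable {R : Type*} [CommRing R]

/-- Terms of the basic hypergeometric series. -/
noncomputable def tau (x a : R) : ℕ → R
  | 0 => 1
  | n + 1 => -x * (1 - a * (x ^ 2) ^ n) * (1 - x * (x ^ 2) ^ n) *
      Ring.inverse ((1 - (x ^ 2) ^ (n + 1)) * (1 - a * x * (x ^ 2) ^ n)) * tau x a n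

/-- Terms of the q-binomial series. -/
noncomputable def eta (x z : R) : ℕ → R
  | 0 => 1
  | n + 1 => z * (1 - x * (x ^ 2) ^ n) * Ring.inverse (1 - (x ^ 2) ^ (n + 1)) * eta x z n

lemma unit_sub {x : R} (hx : IsNilpotent x) (c : R) : IsUnit (1 - c * x) :=
  ((Commute.all c x).isNilpotent_mul_left hx).isUnit_one_sub

lemma unit_pow {x : R} (hx : IsNilpotent x) (n : ℕ) : IsUnit (1 - (x ^ 2) ^ (n + 1)) := by
  have := unit_sub hx (x ^ (2 * n + 1))
  convert this using 2
  ring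

lemma unit_ax {x : R} (hx : IsNilpotent x) (a : R) (n : ℕ) : IsUnit (1 - a * x * (x ^ 2) ^ n) := by
  have := unit_sub hx (a * x ^ (2 * n))
  convert this using 2
  ring

lemma tau_succ {x : R} (hx : IsNilpotent x) (a : R) (n : ℕ) :
    (1 - (x ^ 2) ^ (n + 1)) * (1 - a * x * (x ^ 2) ^ n) * tau x a (n + 1) =
      -x * (1 - a * (x ^ 2) ^ n) * (1 - x * (x ^ 2) ^ n) * tau x a n := by
  have h := Ring.mul_inverse_cancel _ ((unit_pow hx n).mul (unit_ax hx a n))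
  rw [tau]
  linear_combination (-x * (1 - a * (x ^ 2) ^ n) * (1 - x * (x ^ 2) ^ n) * tau x a n) * h

lemma tau_unique {x : R} (hx : IsNilpotent x) (a c : R) (K : ℕ) (t : ℕ → R) (h0 : t 0 = c)
    (hs : ∀ n < K, (1 - (x ^ 2) ^ (n + 1)) * (1 - a * x * (x ^ 2) ^ n) * t (n + 1) =
      -x * (1 - a * (x ^ 2) ^ n) * (1 - x * (x ^ 2) ^ n) * t n) :
    ∀ n ≤ K, t n = c * tau x a n := by
  intro n
  induction n with
  | zero => intro _; simp [h0, tau]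
  | succ n ih =>
    intro hn
    have h1 := hs n (by omega)
    rw [ih (by omega)] at h1
    have h2 := tau_succ hx a n
    apply ((unit_pow hx n).mul (unit_ax hx a n)).mul_left_cancel
    linear_combination h1 - c * h2

lemma eta_succ {x : R} (hx : IsNilpotent x) (z : R) (n : ℕ) :
    (1 - (x ^ 2) ^ (n + 1)) * eta x z (n + 1) = z * (1 - x * (x ^ 2) ^ n) * eta x z n := by
  have h := Ring.mul_inverse_cancel _ (unit_pow hx n)
  rw [eta]
  linear_combination (z * (1 - x * (x ^ 2) ^ n) * eta x z n) * h

lemma tau_dvd (x a : R) (n : ℕ) : x ^ n ∣ tau x a n := by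
  induction n with
  | zero => simp
  | succ n ih =>
    obtain ⟨c, hc⟩ := ih
    rw [tau, hc]
    exact ⟨-1 * (1 - a * (x ^ 2) ^ n) * (1 - x * (x ^ 2) ^ n) *
      Ring.inverse ((1 - (x ^ 2) ^ (n + 1)) * (1 - a * x * (x ^ 2) ^ n)) * c, by ring⟩

lemma eta_dvd (x z : R) (n : ℕ) : z ^ n ∣ eta x z n := by
  induction n with
  | zero => simp
  | succ n ih =>
    obtain ⟨c, hc⟩ := ih
    rw [eta, hc]
    exact ⟨(1 - x * (x ^ 2) ^ n) * Ring.inverse (1 - (x ^ 2) ^ (n + 1)) * c, by ring⟩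

lemma tau_eq_zero {x : R} {M : ℕ} (hM : x ^ M = 0) (a : R) (n : ℕ) (hn : M ≤ n) :
    tau x a n = 0 := by
  obtain ⟨c, hc⟩ := tau_dvd x a n
  rw [hc, pow_eq_zero_of_le hn hM, zero_mul]

lemma tau_shift {x : R} (hx : IsNilpotent x) (a : R) (n : ℕ) :
    (1 - a) * (1 - a * x ^ 2) * (1 - a * x * (x ^ 2) ^ n) * (1 - a * x * (x ^ 2) ^ (n + 1)) *
      tau x (a * (x ^ 2) ^ 2) n =
    (1 - a * (x ^ 2) ^ n) * (1 - a * (x ^ 2) ^ (n + 1)) * (1 - a * x) * (1 - a * x * x ^ 2) *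
      tau x a n := by
  induction n with
  | zero => simp [tau]
  | succ n ih =>
    have h1 := tau_succ hx a n
    have h2 := tau_succ hx (a * (x ^ 2) ^ 2) n
    have u1 := unit_pow hx n
    have u2 := unit_ax hx a n
    apply (u1.mul u2).mul_left_cancel
    generalize tau x (a * (x ^ 2) ^ 2) (n + 1) = A at *
    generalize tau x (a * (x ^ 2) ^ 2) n = B at *
    generalize tau x a (n + 1) = C at *
    generalize tau x a n = D at *
    simp only [pow_succ _ (n + 1), pow_succ _ n] at *
    generalize hN : (x ^ 2) ^ n = N at *
    linear_combination (1 - a) * (1 - a * x ^ 2) * (1 - a * x * N) * (1 - a * x * (N * x ^ 2)) * h2 - (1 - a * (N * x^2)) * (1 - a * (N*x^2*x^2)) * (1 - a * x) * (1 - a * x * x ^ 2) * h1 + (-x) * (1 - a * x^2*x^2 * N) * (1 - x * N) * ih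

lemma tau_partial {x : R} (hx : IsNilpotent x) (a : R) (m : ℕ)
    (hax : IsUnit (1 - a * x ^ 2)) :
    (1 - a) * (1 - a * x * (x ^ 2) ^ m) *
      ((1 - a * x) * (1 - a * x * x ^ 2) * (∑ n ∈ Finset.range m, tau x a n) -
        (1 - a * x ^ 2) ^ 2 * ∑ n ∈ Finset.range m, tau x (a * (x ^ 2) ^ 2) n) =
      a * (1 - x) * (1 - (x ^ 2) ^ m) * (1 - a * x) * (1 - a * x * x ^ 2) * tau x a m := by
  induction m with
  | zero => simp
  | succ n ih =>
    have h1 := tau_succ hx a n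
    have h2 := tau_shift hx a n
    have u2 := unit_ax hx a n
    rw [Finset.sum_range_succ, Finset.sum_range_succ]
    apply (u2.mul hax).mul_left_cancel
    generalize ∑ n ∈ Finset.range n, tau x a n = S at *
    generalize ∑ n ∈ Finset.range n, tau x (a * (x ^ 2) ^ 2) n = T at *
    generalize tau x (a * (x ^ 2) ^ 2) n = B at *
    generalize tau x a (n + 1) = C at *
    generalize tau x a n = D at *
    simp only [pow_succ _ n] at *
    generalize hN : (x ^ 2) ^ n = N at *
    linear_combination (1 - a * x ^ 2) * (1 - a * x * (N * x ^ 2)) * ih - (1 - a * x ^ 2) * a * (1 - x) * (1 - a * x) * (1 - a * x * x ^ 2) * h1 - (1 - a * x ^ 2) ^ 2 * h2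

lemma tau_sum {x : R} {M : ℕ} (hM : x ^ M = 0) (a : R) (ha : IsUnit (1 - a)) :
    (1 - a * x) * (1 - a * x * x ^ 2) * (∑ n ∈ Finset.range M, tau x a n) =
        (1 - a * x ^ 2) ^ 2 * ∑ n ∈ Finset.range M, tau x (a * (x ^ 2) ^ 2) n := by
  have hx : IsNilpotent x := ⟨M, hM⟩
  have hax : IsUnit (1 - a * x ^ 2) := by
    have := unit_sub hx (a * x)
    convert this using 2; ring
  have h := tau_partial hx a M hax
  rw [tau_eq_zero hM a M le_rfl, mul_zero] at h
  have := (ha.mul (unit_ax hx a M)).mul_right_eq_zero.1 h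
  exact sub_eq_zero.1 this

lemma eta_shift {x : R} (z : R) (n : ℕ) :
    eta x (z * x ^ 2) n = (x ^ 2) ^ n * eta x z n := by
  induction n with
  | zero => simp [eta]
  | succ n ih => rw [eta, eta, ih]; ring

lemma eta_sum {x : R} {M : ℕ} (hx : IsNilpotent x) (z : R) (hz : z ^ M = 0) :
    (1 - z) * (∑ n ∈ Finset.range M, eta x z n) =
      (1 - x * z) * ∑ n ∈ Finset.range M, eta x (z * x ^ 2) n := by
  have key : ∀ m, (1 - z) * (∑ n ∈ Finset.range m, eta x z n) -
      (1 - x * z) * ∑ n ∈ Finset.range m, eta x (z * x ^ 2) n = - (1 - (x ^ 2) ^ m) * eta x z m := by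
    intro m
    induction m with
    | zero => simp
    | succ n ih =>
      rw [Finset.sum_range_succ, Finset.sum_range_succ, eta_shift]
      linear_combination ih + eta_succ hx z n
  have h := key M
  obtain ⟨c, hc⟩ := eta_dvd x z M
  rw [hc, hz, zero_mul, mul_zero] at h
  exact sub_eq_zero.1 h

lemma tau_zero_eq_eta {x : R} (n : ℕ) : tau x 0 n = eta x (-x) n := by
  induction n with
  | zero => simp [eta, tau]
  | succ n ih => rw [eta, tau, ih]; simp

lemma eta_sum_zero {x : R} {M : ℕ} (h : 0 < M) : ∑ n ∈ Finset.range M, eta x 0 n = 1 := by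
  obtain ⟨M, rfl⟩ : ∃ k, M = k + 1 := ⟨M - 1, by omega⟩
  rw [Finset.sum_range_succ']
  simp [eta]

lemma tau_zero_sum {x : R} {M : ℕ} (h0 : 0 < M) (hM : x ^ M = 0) (L : ℕ) (hL : M ≤ L) :
    (∏ j ∈ Finset.range L, (1 + x * (x ^ 2) ^ j)) * (∑ n ∈ Finset.range M, tau x 0 n) =
      ∏ j ∈ Finset.range L, (1 + (x ^ 2) ^ (j + 1)) := by
  have key : ∀ l, (∏ j ∈ Finset.range l, (1 + x * (x ^ 2) ^ j)) *
      (∑ n ∈ Finset.range M, eta x (-x) n) =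
      (∏ j ∈ Finset.range l, (1 + (x ^ 2) ^ (j + 1))) *
        (∑ n ∈ Finset.range M, eta x (-x * (x ^ 2) ^ l) n) := by
    intro l
    induction l with
    | zero => simp
    | succ l ih =>
      rw [Finset.prod_range_succ, Finset.prod_range_succ]
      have h := eta_sum (M := M) ⟨M, hM⟩ (-x * (x ^ 2) ^ l)
        (by rw [neg_mul, neg_pow, mul_pow, hM]; simp)
      have e : -x * (x ^ 2) ^ l * x ^ 2 = -x * (x ^ 2) ^ (l + 1) := by ring
      rw [e] at h
      linear_combination (1 + x * (x ^ 2) ^ l) * ih +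
        (∏ j ∈ Finset.range l, (1 + (x ^ 2) ^ (j + 1))) * h
  have h := key L
  have e : -x * (x ^ 2) ^ L = 0 := by
    rw [← pow_mul, pow_eq_zero_of_le (by omega) hM, mul_zero]
  rw [e, eta_sum_zero h0, mul_one] at h
  simpa only [tau_zero_eq_eta] using h

lemma tau_neg_one_sum {x : R} {M : ℕ} (h2 : IsUnit (2 : R)) (hM : x ^ M = 0) (J : ℕ) (hJ : M ≤ J) :
    (∏ j ∈ Finset.range (2 * J), (1 + x * (x ^ 2) ^ j)) * (∑ n ∈ Finset.range M, tau x (-1) n) =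
      (∏ j ∈ Finset.range J, (1 + (x ^ 2) ^ (2 * j + 1)) ^ 2) *
        (∑ n ∈ Finset.range M, tau x 0 n) := by
  have key : ∀ l, (∏ j ∈ Finset.range (2 * l), (1 + x * (x ^ 2) ^ j)) *
      (∑ n ∈ Finset.range M, tau x (-1) n) =
      (∏ j ∈ Finset.range l, (1 + (x ^ 2) ^ (2 * j + 1)) ^ 2) *
        (∑ n ∈ Finset.range M, tau x (-(x ^ 2) ^ (2 * l)) n) := by
    intro l
    induction l with
    | zero => simp
    | succ l ih =>
      rw [Finset.prod_range_succ, mul_add, mul_one, Finset.prod_range_succ, Finset.prod_range_succ]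
      have hu : IsUnit (1 - -(x ^ 2) ^ (2 * l)) := by
        rcases Nat.eq_zero_or_pos l with rfl | hl
        · norm_num; exact h2
        · obtain ⟨k, rfl⟩ : ∃ k, l = k + 1 := ⟨l - 1, by omega⟩
          have := unit_sub ⟨M, hM⟩ (-x ^ (4 * k + 3))
          convert this using 2
          ring
      have h := tau_sum hM (-(x ^ 2) ^ (2 * l)) hu
      have e : -(x ^ 2) ^ (2 * l) * (x ^ 2) ^ 2 = -(x ^ 2) ^ (2 * l + 2) := by ring
      rw [e] at h
      linear_combination (1 + x * (x ^ 2) ^ (2 * l)) * (1 + x * (x ^ 2) ^ (2 * l + 1)) * ih +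
        (∏ j ∈ Finset.range l, (1 + (x ^ 2) ^ (2 * j + 1)) ^ 2) * h
  have h := key J
  have e : -(x ^ 2) ^ (2 * J) = 0 := by
    rw [← pow_mul, pow_eq_zero_of_le (by omega) hM, neg_zero]
  rwa [e] at h

lemma unit_one_add {x : R} (hx : IsNilpotent x) (n : ℕ) : IsUnit (1 + x * (x ^ 2) ^ n) := by
  have := unit_sub hx (-x ^ (2 * n))
  convert this using 1
  ring

/-- Main algebraic identity. -/
lemma main_alg {x : R} {M : ℕ} (h2 : IsUnit (2 : R)) (h0 : 0 < M) (hM : x ^ M = 0) (J : ℕ)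
    (hJ : M ≤ J) (F : ℕ → R)
    (hF0 : F 0 * ∏ j ∈ Finset.range (2 * J), (1 - x * (x ^ 2) ^ j) =
      ∏ j ∈ Finset.range (2 * J), (1 + x * (x ^ 2) ^ j))
    (hs : ∀ n < M, (1 - (x ^ 2) ^ (n + 1)) * (1 + x * (x ^ 2) ^ n) * F (n + 1) =
      x * (1 + (x ^ 2) ^ n) * (1 - x * (x ^ 2) ^ n) * F n) :
    (∑ n ∈ Finset.range M, (-1) ^ n * F n) *
      (∏ j ∈ Finset.range (2 * J), (1 - (x ^ 2) ^ (2 * j + 1))) =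
    (∏ j ∈ Finset.range J, (1 + (x ^ 2) ^ (2 * j + 1)) ^ 2) *
      ∏ j ∈ Finset.range (2 * J), (1 + (x ^ 2) ^ (j + 1)) := by
  have hx : IsNilpotent x := ⟨M, hM⟩
  have hF := tau_unique hx (-1) (F 0) M (fun n => (-1) ^ n * F n) (by simp) (by
    intro n hn
    linear_combination -(-1) ^ n * hs n hn)
  have hS : ∑ n ∈ Finset.range M, (-1) ^ n * F n = F 0 * ∑ n ∈ Finset.range M, tau x (-1) n := by
    rw [Finset.mul_sum]
    exact Finset.sum_congr rfl fun n hn => hF n (Finset.mem_range.1 hn).le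
  have hP : ∏ j ∈ Finset.range (2 * J), (1 - (x ^ 2) ^ (2 * j + 1)) =
      (∏ j ∈ Finset.range (2 * J), (1 - x * (x ^ 2) ^ j)) *
      ∏ j ∈ Finset.range (2 * J), (1 + x * (x ^ 2) ^ j) := by
    rw [← Finset.prod_mul_distrib]
    exact Finset.prod_congr rfl fun j _ => by ring
  have e1 := tau_neg_one_sum h2 hM J hJ
  have e2 := tau_zero_sum h0 hM (2 * J) (by omega)
  rw [hS, hP]
  generalize (∏ j ∈ Finset.range (2 * J), (1 - x * (x ^ 2) ^ j)) = A at *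
  generalize (∏ j ∈ Finset.range (2 * J), (1 + x * (x ^ 2) ^ j)) = B at *
  generalize (∑ n ∈ Finset.range M, tau x (-1) n) = C at *
  generalize (∑ n ∈ Finset.range M, tau x 0 n) = D at *
  generalize (∏ j ∈ Finset.range J, (1 + (x ^ 2) ^ (2 * j + 1)) ^ 2) = E at *
  linear_combination C * B * hF0 + B * e1 + E * e2
end Alg
end EO

namespace EO
section PS
open PowerSeries Finset

/-- Factor of the generating function belonging to the part `i`. -/
noncomputable def fac (g : ℕ → ℤ) (i : ℕ) : ℤ⟦X⟧ :=
  PowerSeries.mk fun m => if m = 0 then 1 else if i ∣ m then g (m / i) else 0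

open scoped PowerSeries.WithPiTopology in
lemma fac_eq {R : Type*} [CommSemiring R] [TopologicalSpace R] [T2Space R]
    (g : ℕ → R) (i : ℕ) (hi : i ≠ 0) :
    (1 : R⟦X⟧) + ∑' j, g (j + 1) • X ^ (i * (j + 1)) =
      PowerSeries.mk fun m => if m = 0 then 1 else if i ∣ m then g (m / i) else 0 := by
  ext m
  have hs := Nat.Partition.summable_genFun_term' (R := R) (fun _ c => g c) hi
  rw [map_add, hs.map_tsum _ (WithPiTopology.continuous_coeff _ _), coeff_mk]
  simp only [map_smul, coeff_X_pow, coeff_one, smul_eq_mul, mul_ite, mul_one, mul_zero]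
  by_cases h0 : m = 0
  · subst h0
    simp [hi]
  · rw [if_neg h0, if_neg h0, zero_add]
    by_cases hd : i ∣ m
    · obtain ⟨c, rfl⟩ := hd
      have hc : c ≠ 0 := by rintro rfl; simp at h0
      rw [tsum_eq_single (c - 1)]
      · have : c - 1 + 1 = c := by omega
        simp [this, Nat.mul_div_cancel_left c (Nat.pos_of_ne_zero hi)]
      · intro b hb
        rw [if_neg]
        intro h
        have := Nat.eq_of_mul_eq_mul_left (Nat.pos_of_ne_zero hi) h
        omega
    · rw [if_neg hd]
      convert tsum_zero with j
      rw [if_neg]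
      rintro rfl
      exact hd ⟨_, rfl⟩

open scoped PowerSeries.WithPiTopology in
lemma genFun_eventually (f : ℕ → ℕ → ℤ) (n : ℕ) : ∀ᶠ N in Filter.atTop,
    coeff n (∏ i ∈ range N, fac (f (i + 1)) (i + 1)) = coeff n (Nat.Partition.genFun f) := by
  have h := (Nat.Partition.hasProd_genFun f).tendsto_prod_nat
  have h1 := (WithPiTopology.tendsto_iff_coeff_tendsto _ _ _ _).1 h n
  simp only [nhds_discrete, Filter.tendsto_pure] at h1
  filter_upwards [h1] with N hN
  rw [← hN]
  congr 1
  exact Finset.prod_congr rfl fun i _ => (fac_eq _ _ (by omega)).symm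

lemma fac_zero (i : ℕ) : fac (fun _ => 0) i = 1 := by
  ext m
  simp [fac, coeff_one]

/-- `(1+X^{2i})/(1-X^{2i})`. -/
noncomputable def BB (i : ℕ) : ℤ⟦X⟧ := fac (fun c => if Even c then 2 else 0) i

/-- `2X^{i}/(1-X^{2i})`. -/
noncomputable def DD (i : ℕ) : ℤ⟦X⟧ := fac (fun c => if Odd c then 2 else 0) i - 1

lemma coeff_one_sub_mul (f : ℤ⟦X⟧) (k m : ℕ) :
    coeff m ((1 - X ^ k) * f) = coeff m f - if k ≤ m then coeff (m - k) f else 0 := by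
  rw [sub_mul, one_mul, map_sub, coeff_X_pow_mul']

lemma BB_mul (i : ℕ) (hi : 0 < i) : (1 - X ^ (2 * i)) * BB i = 1 + X ^ (2 * i) := by
  ext m
  rw [coeff_one_sub_mul, map_add, coeff_one, coeff_X_pow, BB, fac, coeff_mk, coeff_mk]
  by_cases hd : i ∣ m
  · obtain ⟨c, rfl⟩ := hd
    by_cases hc : 2 ≤ c
    · obtain ⟨c, rfl⟩ : ∃ d, c = d + 2 := ⟨c - 2, by omega⟩
      have e : i * (c + 2) - 2 * i = i * c := by
        rw [mul_add, mul_comm i 2]; omega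
      have e1 : 2 * i ≤ i * (c + 2) := by nlinarith
      have e2 : i * (c + 2) = 2 * i ↔ c = 0 := by
        constructor
        · intro h; have : i * c = 0 := by nlinarith
          rcases Nat.mul_eq_zero.1 this with h | h <;> omega
        · rintro rfl; ring
      rw [e, if_pos e1]
      simp [hi.ne', e2, Nat.mul_div_cancel_left _ hi, Nat.even_add]
      split_ifs <;> simp_all
    · have e1 : ¬ 2 * i ≤ i * c := by nlinarith
      have e2 : i * c ≠ 2 * i := by intro h; exact e1 h.ge
      have : c = 0 ∨ c = 1 := by omega
      rcases this with rfl | rfl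
      · simp [hi.ne']
      · rw [mul_one] at *; simp [hi.ne', e1, Nat.div_self hi]
  · have h0 : m ≠ 0 := by rintro rfl; simp at hd
    have h1 : m ≠ 2 * i := by rintro rfl; simp at hd
    simp only [h0, hd, h1, if_false]
    split_ifs with h2 h3 h4
    · omega
    · exact absurd ((Nat.dvd_sub_iff_left h2 (Dvd.intro_left 2 rfl)).1 h4) hd
    · simp
    · simp
    · simp

lemma DD_mul (i : ℕ) (hi : 0 < i) : (1 - X ^ (2 * i)) * DD i = 2 * X ^ i := by
  have h2 : (2 : ℤ⟦X⟧) = C 2 := by simp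
  ext m
  rw [coeff_one_sub_mul, h2, coeff_C_mul, coeff_X_pow, DD, fac, map_sub, map_sub, coeff_mk,
    coeff_mk, coeff_one, coeff_one]
  by_cases hd : i ∣ m
  · obtain ⟨c, rfl⟩ := hd
    by_cases hc : 2 ≤ c
    · obtain ⟨c, rfl⟩ : ∃ d, c = d + 2 := ⟨c - 2, by omega⟩
      have e : i * (c + 2) - 2 * i = i * c := by
        rw [mul_add, mul_comm i 2]; omega
      have e1 : 2 * i ≤ i * (c + 2) := by nlinarith
      have e2 : i * (c + 2) ≠ i := by nlinarith
      rw [e, if_pos e1, if_neg e2]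
      simp [hi.ne', Nat.mul_div_cancel_left _ hi, Nat.odd_add]
      split_ifs <;> simp_all
    · have e1 : ¬ 2 * i ≤ i * c := by nlinarith
      have : c = 0 ∨ c = 1 := by omega
      rcases this with rfl | rfl
      · simp [hi.ne, hi.ne', hi]
      · rw [mul_one] at *; simp [hi.ne', Nat.div_self hi, hi]
  · have h0 : m ≠ 0 := by rintro rfl; simp at hd
    have h1 : m ≠ i := by rintro rfl; simp at hd
    simp only [h0, hd, h1, if_false]
    split_ifs with h2 h3 h4
    · simp
    · exact absurd ((Nat.dvd_sub_iff_left h2 (Dvd.intro_left 2 rfl)).1 h4) hd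
    · simp
    · simp
    · simp

/-- Allowed multiplicities when the largest even part is `2k`. -/
def al (k i c : ℕ) : Prop :=
  (i = 2 * k ∧ Odd c) ∨ (Even c ∧ ((Even i ∧ i < 2 * k) ∨ (Odd i ∧ 2 * k < i)))

/-- The same, but `2k` must not occur. -/
def al' (k i c : ℕ) : Prop :=
  (Even c ∧ ((Even i ∧ i < 2 * k) ∨ (Odd i ∧ 2 * k < i)))

open Classical in
/-- weights -/
noncomputable def wt (P : ℕ → ℕ → Prop) (i c : ℕ) : ℤ := if P i c then 2 else 0

lemma prod_range_double (g : ℕ → ℤ⟦X⟧) (N : ℕ) :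
    ∏ i ∈ range (2 * N), g i = (∏ j ∈ range N, g (2 * j)) * ∏ j ∈ range N, g (2 * j + 1) := by
  induction N with
  | zero => simp
  | succ N ih =>
    rw [mul_add, mul_one, prod_range_succ, prod_range_succ, ih, prod_range_succ, prod_range_succ]
    ring

/-- generating function for the largest even part `2k` -/
noncomputable def FF (N : ℕ) : ℕ → ℤ⟦X⟧
  | 0 => ∏ j ∈ range N, BB (2 * j + 1)
  | k + 1 => (∏ j ∈ range k, BB (2 * j + 2)) * DD (2 * k + 2) * ∏ j ∈ Ico (k + 1) N, BB (2 * j + 1)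

lemma fac_odd (P : ℕ → ℕ → Prop) (k j : ℕ) (hP : P = al k ∨ P = al' k) :
    fac (wt P (2 * j + 1)) (2 * j + 1) = if k ≤ j then BB (2 * j + 1) else 1 := by
  have e : wt P (2 * j + 1) = if k ≤ j then (fun c => if Even c then 2 else 0) else fun _ => 0 := by
    funext c
    have h1 : 2 * j + 1 ≠ 2 * k := by omega
    have h2 : 2 * k < 2 * j + 1 ↔ k ≤ j := by omega
    have h3 : ¬ Even (2 * j + 1) := by simp
    rcases hP with rfl | rfl <;> by_cases h : k ≤ j <;> simp [wt, al, al', h1, h2, h]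
  rw [e]
  split_ifs
  · rfl
  · exact fac_zero _

lemma fac_even (k j : ℕ) :
    fac (wt (al k) (2 * j + 2)) (2 * j + 2) =
      if j + 1 < k then BB (2 * j + 2) else if j + 1 = k then 1 + DD (2 * j + 2) else 1 := by
  have h3 : Even (2 * j + 2) := ⟨j + 1, by ring⟩
  have h4 : ¬ Odd (2 * j + 2) := by simpa using h3
  have e : wt (al k) (2 * j + 2) = if j + 1 < k then (fun c => if Even c then 2 else 0) else
      if j + 1 = k then (fun c => if Odd c then 2 else 0) else fun _ => 0 := by
    funext c
    have h1 : 2 * j + 2 = 2 * k ↔ j + 1 = k := by omega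
    have h2 : 2 * j + 2 < 2 * k ↔ j + 1 < k := by omega
    rcases lt_trichotomy (j + 1) k with h | h | h
    · simp [wt, al, h1, h2, h3, h4, h, h.ne]
    · simp [wt, al, h1, h2, h3, h4, h]
    · simp [wt, al, h1, h2, h3, h4, h.not_gt, h.ne']
  rw [e]
  split_ifs
  · rfl
  · simp [DD]
  · exact fac_zero _

lemma fac_even' (k j : ℕ) :
    fac (wt (al' k) (2 * j + 2)) (2 * j + 2) = if j + 1 < k then BB (2 * j + 2) else 1 := by
  have h3 : Even (2 * j + 2) := ⟨j + 1, by ring⟩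
  have h4 : ¬ Odd (2 * j + 2) := by simpa using h3
  have e : wt (al' k) (2 * j + 2) = if j + 1 < k then (fun c => if Even c then 2 else 0) else
      fun _ => 0 := by
    funext c
    have h2 : 2 * j + 2 < 2 * k ↔ j + 1 < k := by omega
    by_cases h : j + 1 < k <;> simp [wt, al', h2, h3, h4, h]
  rw [e]
  split_ifs
  · rfl
  · exact fac_zero _

lemma prod_ite_le (g : ℕ → ℤ⟦X⟧) (k N : ℕ) (h : k ≤ N) :
    ∏ j ∈ range N, (if k ≤ j then g j else 1) = ∏ j ∈ Ico k N, g j := by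
  rw [← prod_range_mul_prod_Ico _ h, prod_eq_one, one_mul]
  · exact prod_congr rfl fun j hj => if_pos (mem_Ico.1 hj).1
  · intro j hj
    exact if_neg (by simpa using hj)

lemma prod_al_zero (N : ℕ) :
    ∏ i ∈ range (2 * N), fac (wt (al 0) (i + 1)) (i + 1) = FF N 0 := by
  rw [prod_range_double]
  simp only [fac_odd _ 0 _ (Or.inl rfl), add_assoc, Nat.reduceAdd, fac_even]
  simp [FF]

lemma prod_al_succ (N k : ℕ) (h : k + 1 ≤ N) :
    ∏ i ∈ range (2 * N), fac (wt (al (k + 1)) (i + 1)) (i + 1) -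
    ∏ i ∈ range (2 * N), fac (wt (al' (k + 1)) (i + 1)) (i + 1) = FF N (k + 1) := by
  rw [prod_range_double, prod_range_double]
  simp only [fac_odd _ (k + 1) _ (Or.inl rfl), fac_odd _ (k + 1) _ (Or.inr rfl),
    add_assoc, Nat.reduceAdd, fac_even, fac_even']
  rw [prod_ite_le _ _ _ h]
  have e1 : ∏ j ∈ range N, (if j + 1 < k + 1 then BB (2 * j + 2) else
      if j + 1 = k + 1 then 1 + DD (2 * j + 2) else 1) =
      (∏ j ∈ range k, BB (2 * j + 2)) * (1 + DD (2 * k + 2)) := by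
    rw [← prod_range_mul_prod_Ico _ h, prod_range_succ, prod_eq_one (s := Ico (k + 1) N), mul_one]
    · congr 1
      · exact prod_congr rfl fun j hj => by simp [mem_range.1 hj]
      · simp
    · intro j hj
      have := (mem_Ico.1 hj).1
      rw [if_neg (by omega), if_neg (by omega)]
  have e2 : ∏ j ∈ range N, (if j + 1 < k + 1 then BB (2 * j + 2) else 1) =
      (∏ j ∈ range k, BB (2 * j + 2)) := by
    rw [← prod_range_mul_prod_Ico _ h, prod_range_succ, prod_eq_one (s := Ico (k + 1) N), mul_one]
    · simp only [lt_irrefl, if_false, mul_one]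
      exact prod_congr rfl fun j hj => by simp [mem_range.1 hj]
    · intro j hj
      have := (mem_Ico.1 hj).1
      rw [if_neg (by omega)]
  rw [e1, e2, FF]
  ring

lemma FF_zero_mul (N : ℕ) :
    FF N 0 * ∏ j ∈ range N, (1 - X ^ 2 * ((X ^ 2) ^ 2) ^ j) =
      ∏ j ∈ range N, (1 + X ^ 2 * ((X ^ 2) ^ 2) ^ j) := by
  rw [FF, ← prod_mul_distrib]
  refine prod_congr rfl fun j _ => ?_
  have h := BB_mul (2 * j + 1) (by omega)
  have e : (X : ℤ⟦X⟧) ^ (2 * (2 * j + 1)) = X ^ 2 * ((X ^ 2) ^ 2) ^ j := by ring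
  rw [e] at h
  rw [mul_comm, h]

lemma FF_succ (N n : ℕ) (h : n + 1 ≤ N) :
    (1 - ((X ^ 2) ^ 2) ^ (n + 1)) * (1 + X ^ 2 * ((X ^ 2) ^ 2) ^ n) * FF N (n + 1) =
      X ^ 2 * (1 + ((X ^ 2) ^ 2) ^ n) * (1 - X ^ 2 * ((X ^ 2) ^ 2) ^ n) * FF N n := by
  have hb := BB_mul (2 * n + 1) (by omega)
  have hd := DD_mul (2 * n + 2) (by omega)
  have e : (X : ℤ⟦X⟧) ^ (2 * (2 * n + 1)) = X ^ 2 * ((X ^ 2) ^ 2) ^ n := by ring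
  have e1 : (X : ℤ⟦X⟧) ^ (2 * (2 * n + 2)) = ((X ^ 2) ^ 2) ^ (n + 1) := by ring
  rw [e] at hb
  rw [e1] at hd
  cases n with
  | zero =>
    rw [FF, FF, range_eq_Ico N, prod_eq_prod_Ico_succ_bot (by omega : 0 < N)]
    simp only [range_zero, prod_empty, mul_zero, zero_add, pow_zero, mul_one, one_mul, pow_one] at *
    generalize ∏ j ∈ Ico 1 N, BB (2 * j + 1) = T
    linear_combination (1 + X ^ 2) * T * hd - 2 * X ^ 2 * T * hb
  | succ k =>
    have hb2 := BB_mul (2 * k + 2) (by omega)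
    have hd2 := DD_mul (2 * k + 2) (by omega)
    have e1 : (X : ℤ⟦X⟧) ^ (2 * (2 * k + 2)) = ((X ^ 2) ^ 2) ^ (k + 1) := by ring
    have e2 : (X : ℤ⟦X⟧) ^ (2 * (k + 1) + 2) = X ^ 2 * X ^ (2 * k + 2) := by ring
    rw [e1] at hd2 hb2
    rw [e2] at hd
    rw [FF, FF, prod_range_succ, prod_eq_prod_Ico_succ_bot (by omega : k + 1 < N)]
    generalize ∏ j ∈ Ico (k + 1 + 1) N, BB (2 * j + 1) = T at *
    generalize ∏ j ∈ range k, BB (2 * j + 2) = S at *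
    generalize BB (2 * (k + 1) + 1) = b1 at *
    generalize BB (2 * k + 2) = b2 at *
    generalize DD (2 * k + 2) = d2 at *
    generalize DD (2 * (k + 1) + 2) = d1 at *
    generalize hY : (X : ℤ⟦X⟧) ^ (2 * k + 2) = Y at *
    generalize ((X : ℤ⟦X⟧) ^ 2) ^ 2 ^ (k + 1) = Z at *
    linear_combination (1 + X ^ 2 * ((X ^ 2) ^ 2) ^ (k + 1)) * S * b2 * T * hd - X ^ 2 * (1 + ((X ^ 2) ^ 2) ^ (k + 1)) * S * d2 * T * hb - (1 + X ^ 2 * ((X ^ 2) ^ 2) ^ (k + 1)) * S * T * X ^ 2 * (b2 * hd2 - d2 * hb2)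

/-- nonnegative coefficients supported on multiples of four -/
def Good (f : ℤ⟦X⟧) : Prop := ∀ m, 0 ≤ coeff m f ∧ (¬ 4 ∣ m → coeff m f = 0)

lemma Good.mul {f g : ℤ⟦X⟧} (hf : Good f) (hg : Good g) : Good (f * g) := by
  intro m
  rw [coeff_mul]
  refine ⟨sum_nonneg fun p _ => mul_nonneg (hf _).1 (hg _).1, fun hm => sum_eq_zero ?_⟩
  rintro ⟨a, b⟩ hp
  rw [HasAntidiagonal.mem_antidiagonal] at hp
  by_cases ha : 4 ∣ a
  · have hb : ¬ 4 ∣ b := fun hb => hm (hp ▸ dvd_add ha hb)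
    simp [(hg b).2 hb]
  · simp [(hf a).2 ha]

lemma Good.one : Good 1 := by
  intro m
  rw [coeff_one]
  split_ifs with h
  · simp [h]
  · simp

lemma Good.add {f g : ℤ⟦X⟧} (hf : Good f) (hg : Good g) : Good (f + g) := fun m =>
  ⟨by rw [map_add]; exact add_nonneg (hf m).1 (hg m).1,
   fun h => by rw [map_add, (hf m).2 h, (hg m).2 h, add_zero]⟩

lemma Good.prod {ι : Type*} (s : Finset ι) (f : ι → ℤ⟦X⟧) (h : ∀ i ∈ s, Good (f i)) :
    Good (∏ i ∈ s, f i) :=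
  prod_induction f Good (fun _ _ => Good.mul) Good.one h

lemma Good.Q (k : ℕ) : Good (((X ^ 2) ^ 2) ^ k) := by
  intro m
  rw [← pow_mul, ← pow_mul, coeff_X_pow]
  split_ifs with h
  · subst h; simp only [zero_le_one, true_and]; intro h; omega
  · simp

/-- geometric series in `X^(4(2j+1))` -/
noncomputable def geo (j : ℕ) : ℤ⟦X⟧ := PowerSeries.mk fun m => if 4 * (2 * j + 1) ∣ m then 1 else 0

lemma geo_good (j : ℕ) : Good (geo j) := by
  intro m
  rw [geo, coeff_mk]
  split_ifs with h
  · exact ⟨by simp, fun h' => absurd ((Dvd.intro _ rfl).trans h) h'⟩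
  · simp

lemma geo_mul (j : ℕ) : (1 - ((X ^ 2) ^ 2) ^ (2 * j + 1)) * geo j = 1 := by
  rw [← pow_mul, ← pow_mul]
  ext m
  rw [coeff_one_sub_mul, geo, coeff_mk, coeff_mk, coeff_one]
  have e : 2 * (2 * (2 * j + 1)) = 4 * (2 * j + 1) := by ring
  rw [e]
  by_cases h : 4 * (2 * j + 1) ≤ m
  · rw [if_pos h, if_neg (by omega : m ≠ 0)]
    simp [Nat.dvd_sub_iff_left h dvd_rfl]
  · rw [if_neg h]
    by_cases h0 : m = 0
    · simp [h0]
    · have : ¬ 4 * (2 * j + 1) ∣ m := fun hd => h (Nat.le_of_dvd (by omega) hd)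
      simp [h0, this]

lemma main_ps (n J : ℕ) (hJ : n + 1 ≤ J) :
    let c := coeff n (∑ k ∈ range (n + 1), (-1) ^ k * FF (2 * J) k)
    0 ≤ c ∧ (¬ 4 ∣ n → c = 0) := by
  set A := ∑ k ∈ range (n + 1), (-1) ^ k * FF (2 * J) k with hA
  set G := ∏ j ∈ range (2 * J), geo j with hG
  set P := ∏ j ∈ range (2 * J), (1 - (((X : ℤ⟦X⟧) ^ 2) ^ 2) ^ (2 * j + 1)) with hP
  set W := (∏ j ∈ range J, (1 + (((X : ℤ⟦X⟧) ^ 2) ^ 2) ^ (2 * j + 1)) ^ 2) *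
      ∏ j ∈ range (2 * J), (1 + (((X : ℤ⟦X⟧) ^ 2) ^ 2) ^ (j + 1)) with hW
  have hPG : P * G = 1 := by
    rw [hP, hG, ← prod_mul_distrib]
    exact prod_eq_one fun j _ => geo_mul j
  have hgood : Good (W * G) := by
    refine Good.mul (Good.mul ?_ ?_) (Good.prod _ _ fun j _ => geo_good j)
    · refine Good.prod _ _ fun j _ => ?_
      rw [sq]
      exact (Good.one.add (Good.Q _)).mul (Good.one.add (Good.Q _))
    · exact Good.prod _ _ fun j _ => Good.one.add (Good.Q _)
  suffices h : coeff n A = coeff n (W * G) by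
    simp only [h]
    exact hgood n
  let I : Ideal ℚ⟦X⟧ := Ideal.span {X ^ (2 * (n + 1))}
  let ψ : ℤ⟦X⟧ →+* (ℚ⟦X⟧ ⧸ I) := (Ideal.Quotient.mk I).comp (PowerSeries.map (Int.castRingHom ℚ))
  have hx : (ψ (X ^ 2)) ^ (n + 1) = 0 := by
    rw [← map_pow, ← pow_mul]
    simp only [ψ, RingHom.comp_apply, map_pow, PowerSeries.map_X]
    rw [← map_pow, Ideal.Quotient.eq_zero_iff_mem]
    exact Ideal.mem_span_singleton_self _
  have h2 : IsUnit (2 : ℚ⟦X⟧ ⧸ I) := by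
    have : IsUnit (2 : ℚ) := by simp
    have := (this.map (PowerSeries.C (R := ℚ))).map (Ideal.Quotient.mk I)
    rwa [map_ofNat, map_ofNat] at this
  have key := main_alg (x := ψ (X ^ 2)) h2 (Nat.succ_pos n) hx J hJ (fun k => ψ (FF (2 * J) k))
    (by
      have := congrArg ψ (FF_zero_mul (2 * J))
      simpa only [map_mul, map_prod, map_sub, map_add, map_one, map_pow] using this)
    (by
      intro k hk
      have := congrArg ψ (FF_succ (2 * J) k (by omega))
      simpa only [map_mul, map_prod, map_sub, map_add, map_one, map_pow] using this)
  have key2 : ψ (A * P) = ψ W := by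
    rw [hA, hP, hW]
    simpa only [map_mul, map_prod, map_sub, map_add, map_one, map_pow, map_sum, map_neg] using key
  have key3 : ψ (A - W * G) = 0 := by
    have : A - W * G = (A * P - W) * G := by linear_combination (-A) * hPG
    rw [this, map_mul, map_sub, key2, sub_self, zero_mul]
  simp only [ψ, RingHom.comp_apply] at key3
  rw [Ideal.Quotient.eq_zero_iff_mem, Ideal.mem_span_singleton, X_pow_dvd_iff] at key3
  have h := key3 n (by omega)
  rw [coeff_map, map_sub] at h
  have h' : coeff n A - coeff n (W * G) = 0 := by
    rw [eq_intCast] at h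
    exact_mod_cast h
  omega
end PS
end EO

namespace EO
section Comb
open Finset

lemma lep_eq (s : Multiset ℕ) (m : ℕ) (hm : m ∈ s) (he : Even m) (hle : ∀ i ∈ s, Even i → i ≤ m) :
    largestEvenPart s = m := by
  unfold largestEvenPart
  apply le_antisymm
  · rw [Multiset.sup_le]
    intro b hb
    rw [Multiset.mem_filter] at hb
    exact hle b hb.1 (Nat.even_iff.2 hb.2)
  · exact Multiset.le_sup (Multiset.mem_filter.2 ⟨hm, Nat.even_iff.1 he⟩)

lemma lep_none (s : Multiset ℕ) (h : ¬ ∃ x ∈ s, Even x) : largestEvenPart s = 0 := by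
  unfold largestEvenPart
  rw [Multiset.filter_eq_nil.2]
  · rfl
  · intro a ha hb
    exact h ⟨a, ha, Nat.even_iff.2 hb⟩

lemma lep_some (s : Multiset ℕ) (h : ∃ x ∈ s, Even x) :
    largestEvenPart s ∈ s ∧ Even (largestEvenPart s) ∧ ∀ i ∈ s, Even i → i ≤ largestEvenPart s := by
  obtain ⟨x, hx, hxe⟩ := h
  obtain ⟨m, hm, hmax⟩ := Finset.exists_max_image (s.toFinset.filter Even) id
    ⟨x, by simp [hx, hxe]⟩
  simp only [Finset.mem_filter, Multiset.mem_toFinset, id] at hm hmax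
  have := lep_eq s m hm.1 hm.2 fun i hi he => hmax i ⟨hi, he⟩
  rw [this]
  exact ⟨hm.1, hm.2, fun i hi he => hmax i ⟨hi, he⟩⟩

/-- the partition is admissible with largest even part `2k` (none if `k = 0`) -/
def EE (s : Multiset ℕ) (k : ℕ) : Prop :=
  (k ≠ 0 → 2 * k ∈ s) ∧ ∀ i ∈ s, al k i (s.count i)

/-- condition of `D0` -/
def c0 (s : Multiset ℕ) : Prop :=
     (∀ x ∈ s, ∀ y ∈ s, Even x → Odd y → x < y) ∧
     (∀ x ∈ s, x ≠ largestEvenPart s → Even (s.count x)) ∧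
     ((¬ ∃ x ∈ s, Even x) ∨
       (Odd (s.count (largestEvenPart s)) ∧ largestEvenPart s % 4 = 0))

/-- condition of `D2` -/
def c2 (s : Multiset ℕ) : Prop :=
     (∀ x ∈ s, ∀ y ∈ s, Even x → Odd y → x < y) ∧
     (∀ x ∈ s, x ≠ largestEvenPart s → Even (s.count x)) ∧
     (∃ x ∈ s, Even x) ∧
     Odd (s.count (largestEvenPart s)) ∧ largestEvenPart s % 4 = 2

lemma EE_lep (s : Multiset ℕ) (hs : ∀ x ∈ s, 0 < x) (k : ℕ) (h : EE s k) :
    largestEvenPart s = 2 * k := by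
  obtain ⟨h1, h2⟩ := h
  by_cases hk : k = 0
  · subst hk
    rw [lep_none]
    rintro ⟨x, hx, he⟩
    have h0 := hs x hx
    rcases h2 x hx with h | ⟨_, h | h⟩
    · omega
    · omega
    · exact (Nat.not_even_iff_odd.2 h.1) he
  · refine lep_eq s _ (h1 hk) (even_two_mul k) fun i hi he => ?_
    rcases h2 i hi with h | ⟨_, h | h⟩
    · omega
    · omega
    · exact absurd he (Nat.not_even_iff_odd.2 h.1)

lemma EE_common (s : Multiset ℕ) (k : ℕ) (h : EE s k) (hl : largestEvenPart s = 2 * k) :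
    (∀ x ∈ s, ∀ y ∈ s, Even x → Odd y → x < y) ∧
     (∀ x ∈ s, x ≠ largestEvenPart s → Even (s.count x)) := by
  refine ⟨fun x hx y hy hxe hyo => ?_, fun x hx hne => ?_⟩
  · have hx' : x ≤ 2 * k := by
      rcases h.2 x hx with h | ⟨_, h | h⟩
      · omega
      · omega
      · exact absurd hxe (Nat.not_even_iff_odd.2 h.1)
    have hy' : 2 * k < y := by
      rcases h.2 y hy with h | ⟨_, h | h⟩
      · exact absurd hyo (Nat.not_odd_iff_even.2 (h.1 ▸ even_two_mul k))
      · exact absurd hyo (Nat.not_odd_iff_even.2 h.1)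
      · exact h.2
    omega
  · rcases h.2 x hx with h | h
    · exact absurd (h.1.trans hl.symm) hne
    · exact h.1

lemma EE_of (s : Multiset ℕ) (hex : ∃ x ∈ s, Even x)
    (h1 : ∀ x ∈ s, ∀ y ∈ s, Even x → Odd y → x < y)
    (h2 : ∀ x ∈ s, x ≠ largestEvenPart s → Even (s.count x))
    (h3 : Odd (s.count (largestEvenPart s))) : EE s (largestEvenPart s / 2) := by
  obtain ⟨ha, hb, hc⟩ := lep_some s hex
  have e : 2 * (largestEvenPart s / 2) = largestEvenPart s := Nat.two_mul_div_two_of_even hb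
  refine ⟨fun _ => by rw [e]; exact ha, fun i hi => ?_⟩
  unfold al
  rw [e]
  by_cases hi' : i = largestEvenPart s
  · left; exact ⟨hi', hi' ▸ h3⟩
  · right
    refine ⟨h2 i hi hi', ?_⟩
    rcases Nat.even_or_odd i with he | ho
    · left; exact ⟨he, lt_of_le_of_ne (hc i hi he) hi'⟩
    · right; exact ⟨ho, h1 _ ha _ hi hb ho⟩

lemma c0_iff (s : Multiset ℕ) (hs : ∀ x ∈ s, 0 < x) :
    c0 s ↔ EE s (largestEvenPart s / 2) ∧ Even (largestEvenPart s / 2) := by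
  constructor
  · rintro ⟨h1, h2, h3⟩
    by_cases hex : ∃ x ∈ s, Even x
    · obtain ⟨h3, h4⟩ := h3.resolve_left (not_not.2 hex)
      exact ⟨EE_of s hex h1 h2 h3, Nat.even_iff.2 (by omega)⟩
    · rw [lep_none s hex] at *
      refine ⟨⟨fun h => absurd rfl h, fun i hi => Or.inr ⟨h2 i hi (hs i hi).ne', Or.inr ⟨?_, ?_⟩⟩⟩,
        by simp⟩
      · rw [← Nat.not_even_iff_odd]; exact fun he => hex ⟨i, hi, he⟩
      · exact hs i hi
  · rintro ⟨h, he⟩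
    have hl := EE_lep s hs _ h
    obtain ⟨h1, h2⟩ := EE_common s _ h hl
    refine ⟨h1, h2, ?_⟩
    by_cases hex : ∃ x ∈ s, Even x
    · right
      obtain ⟨ha, hb, hc⟩ := lep_some s hex
      have he' := Nat.even_iff.1 he
      refine ⟨?_, by omega⟩
      rcases h.2 _ ha with h | ⟨_, h | h⟩
      · exact h.2
      · omega
      · omega
    · exact Or.inl hex

lemma c2_iff (s : Multiset ℕ) (hs : ∀ x ∈ s, 0 < x) :
    c2 s ↔ EE s (largestEvenPart s / 2) ∧ ¬ Even (largestEvenPart s / 2) := by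
  constructor
  · rintro ⟨h1, h2, hex, h3, h4⟩
    exact ⟨EE_of s hex h1 h2 h3, by rw [Nat.even_iff]; omega⟩
  · rintro ⟨h, he⟩
    have hl := EE_lep s hs _ h
    obtain ⟨h1, h2⟩ := EE_common s _ h hl
    rw [Nat.even_iff] at he
    have hex : ∃ x ∈ s, Even x := ⟨_, h.1 (by omega), even_two_mul _⟩
    obtain ⟨ha, hb, hc⟩ := lep_some s hex
    refine ⟨h1, h2, hex, ?_, by omega⟩
    rcases h.2 _ ha with h | ⟨_, h | h⟩
    · exact h.2
    · omega
    · omega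

open Classical in
lemma ncard_eq (c : Multiset ℕ → Prop) (n : ℕ) :
    ({op : Multiset ℕ × Finset ℕ | (∀ x ∈ op.1, 0 < x) ∧ op.1.sum = n ∧ op.2 ⊆ op.1.toFinset ∧
      c op.1}).ncard = ∑ p : n.Partition, if c p.parts then 2 ^ p.parts.toFinset.card else 0 := by
  let T : Finset (Σ _ : n.Partition, Finset ℕ) :=
    (univ.filter fun p : n.Partition => c p.parts).sigma fun p => p.parts.toFinset.powerset
  have h : {op : Multiset ℕ × Finset ℕ | (∀ x ∈ op.1, 0 < x) ∧ op.1.sum = n ∧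
      op.2 ⊆ op.1.toFinset ∧ c op.1} =
      ((T.image fun t => (t.1.parts, t.2) : Finset (Multiset ℕ × Finset ℕ)) :
        Set (Multiset ℕ × Finset ℕ)) := by
    ext ⟨s, S⟩
    simp only [Set.mem_ofPred_eq, coe_image, Set.mem_image, mem_coe, T, mem_sigma, mem_filter,
      mem_univ, true_and, mem_powerset, Prod.mk.injEq, Sigma.exists]
    constructor
    · rintro ⟨h1, h2, h3, h4⟩
      exact ⟨⟨s, fun {i} hi => h1 i hi, h2⟩, S, ⟨h4, h3⟩, rfl, rfl⟩
    · rintro ⟨p, S', ⟨h4, h3⟩, rfl, rfl⟩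
      exact ⟨fun x hx => p.parts_pos hx, p.parts_sum, h3, h4⟩
  rw [h, Set.ncard_coe_finset, card_image_of_injective, card_sigma, sum_filter]
  · exact sum_congr rfl fun p _ => by simp [card_powerset]
  · rintro ⟨p, S⟩ ⟨q, S'⟩ h
    simp only [Prod.mk.injEq] at h
    obtain ⟨h1, rfl⟩ := h
    obtain rfl := Nat.Partition.ext h1
    rfl

open Classical in
lemma wt_prod (P : ℕ → ℕ → Prop) (s : Multiset ℕ) :
    s.toFinsupp.prod (wt P) =
      if ∀ i ∈ s, P i (s.count i) then (2 : ℤ) ^ s.toFinset.card else 0 := by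
  have h : s.toFinsupp.prod (wt P) =
      ∏ i ∈ s.toFinset, if P i (s.count i) then (2 : ℤ) else 0 := by
    rw [Finsupp.prod, Multiset.toFinsupp_support]
    exact prod_congr rfl fun i _ => rfl
  rw [h, prod_ite_zero]
  simp

open Classical in
/-- weight of a partition in the class `k` -/
noncomputable def EW (s : Multiset ℕ) (k : ℕ) : ℤ :=
  if EE s k then (2 : ℤ) ^ s.toFinset.card else 0

lemma EW_zero (s : Multiset ℕ) : EW s 0 = s.toFinsupp.prod (wt (al 0)) := by
  classical
  have h : EE s 0 ↔ ∀ i ∈ s, al 0 i (s.count i) := ⟨fun h => h.2, fun h => ⟨fun h => absurd rfl h, h⟩⟩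
  rw [wt_prod, EW, if_congr h rfl rfl]

lemma EW_succ (s : Multiset ℕ) (k : ℕ) : EW s (k + 1) =
    s.toFinsupp.prod (wt (al (k + 1))) - s.toFinsupp.prod (wt (al' (k + 1))) := by
  classical
  rw [wt_prod, wt_prod, EW]
  by_cases h : 2 * (k + 1) ∈ s
  · have h1 : ¬ ∀ i ∈ s, al' (k + 1) i (s.count i) := by
      intro H
      rcases H _ h with ⟨_, h | h⟩
      · omega
      · omega
    simp [EE, h, h1]
  · have h1 : (∀ i ∈ s, al (k + 1) i (s.count i)) ↔ ∀ i ∈ s, al' (k + 1) i (s.count i) := by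
      refine forall₂_congr fun i hi => ?_
      have : i ≠ 2 * (k + 1) := by rintro rfl; exact h hi
      simp [al, al', this]
    simp [EE, h, h1]

lemma pointwise {n : ℕ} (p : n.Partition) :
    (∑ k ∈ range (n + 1), (-1) ^ k * EW p.parts k) =
      (-1) ^ (largestEvenPart p.parts / 2) * EW p.parts (largestEvenPart p.parts / 2) := by
  have hs : ∀ x ∈ p.parts, 0 < x := fun x hx => p.parts_pos hx
  rw [sum_eq_single]
  · intro k _ hk
    rw [EW, if_neg, mul_zero]
    intro h
    have := EE_lep _ hs k h
    omega
  · intro h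
    exfalso
    apply h
    rw [mem_range]
    by_cases hex : ∃ x ∈ p.parts, Even x
    · have := Nat.Partition.le_of_mem_parts (lep_some _ hex).1
      omega
    · rw [lep_none _ hex]; omega

lemma diff_eq (n : ℕ) : (D0 n : ℤ) - D2 n =
    ∑ k ∈ range (n + 1), (-1) ^ k * ∑ p : n.Partition, EW p.parts k := by
  classical
  have h0 : D0 n = ∑ p : n.Partition, if c0 p.parts then 2 ^ p.parts.toFinset.card else 0 :=
    ncard_eq c0 n
  have h2 : D2 n = ∑ p : n.Partition, if c2 p.parts then 2 ^ p.parts.toFinset.card else 0 :=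
    ncard_eq c2 n
  simp only [mul_sum]
  rw [sum_comm, h0, h2]
  push_cast
  rw [← sum_sub_distrib]
  refine sum_congr rfl fun p _ => ?_
  have hs : ∀ x ∈ p.parts, 0 < x := fun x hx => p.parts_pos hx
  rw [pointwise, EW]
  simp only [c0_iff _ hs, c2_iff _ hs]
  by_cases hE : EE p.parts (largestEvenPart p.parts / 2)
  · by_cases he : Even (largestEvenPart p.parts / 2)
    · simp [hE, he]
    · simp [hE, he, (Nat.not_even_iff_odd.1 he).neg_one_pow]
  · simp [hE]

lemma class_eventually (n k : ℕ) : ∀ᶠ N in Filter.atTop,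
    PowerSeries.coeff n (FF N k) = ∑ p : n.Partition, EW p.parts k := by
  have ht : Filter.Tendsto (fun N : ℕ => 2 * N) Filter.atTop Filter.atTop :=
    Filter.tendsto_id.const_mul_atTop' (by norm_num)
  cases k with
  | zero =>
    filter_upwards [ht.eventually (genFun_eventually (wt (al 0)) n)] with N hN
    rw [prod_al_zero, Nat.Partition.coeff_genFun] at hN
    rw [hN]
    exact sum_congr rfl fun p _ => (EW_zero _).symm
  | succ k =>
    filter_upwards [ht.eventually (genFun_eventually (wt (al (k + 1))) n),
      ht.eventually (genFun_eventually (wt (al' (k + 1))) n),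
      Filter.eventually_ge_atTop (k + 1)] with N h1 h2 h3
    rw [← prod_al_succ N k h3, map_sub, h1, h2, Nat.Partition.coeff_genFun,
      Nat.Partition.coeff_genFun, ← sum_sub_distrib]
    exact sum_congr rfl fun p _ => (EW_succ _ _).symm

lemma final (n : ℕ) : 0 ≤ (D0 n : ℤ) - D2 n ∧ (¬ 4 ∣ n → (D0 n : ℤ) - D2 n = 0) := by
  have h : ∀ᶠ N in Filter.atTop, ∀ k ∈ range (n + 1),
      PowerSeries.coeff n (FF N k) = ∑ p : n.Partition, EW p.parts k :=
    (Filter.eventually_all_finset _).2 fun k _ => class_eventually n k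
  obtain ⟨N0, hN⟩ := Filter.eventually_atTop.1 h
  have hN := hN (2 * (N0 + n + 1)) (by omega)
  have hm := main_ps n (N0 + n + 1) (by omega)
  have e : (D0 n : ℤ) - D2 n = PowerSeries.coeff n
      (∑ k ∈ range (n + 1), (-1) ^ k * FF (2 * (N0 + n + 1)) k) := by
    rw [diff_eq, map_sum]
    refine sum_congr rfl fun k hk => ?_
    rw [← hN k hk]
    rcases Nat.even_or_odd k with h | h
    · simp [h.neg_one_pow]
    · simp [h.neg_one_pow]
  rw [e]
  exact hm
end Comb
end EO

theorem stmt15 (n : ℕ) (hn : 0 < n) :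
    (¬ (4 ∣ n) → D0 n = D2 n) ∧ (4 ∣ n → D2 n ≤ D0 n) := by
  obtain ⟨h1, h2⟩ := EO.final n
  refine ⟨fun h => ?_, fun _ => ?_⟩
  · have := h2 h
    omega
  · omega
end

section
/- For every nonnegative integer n: if n is even then ōcp^o_{1,1,2}(n) ≤ ōcp^e_{1,1,2}(n), and if n is odd then ōcp^o_{1,1,2}(n) = ōcp^e_{1,1,2}(n). -/
/-- The set of `(1,1,2)`-overcopartitions of size `n`: triples `(γ̄, ρ, σ̄)` where
`γ̄ = (γ, S)` and `σ̄ = (σ, T)` are overpartitions (a partition together with a subset of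
its part sizes which are overlined), every part of `γ` and of `σ` is odd, and `ρ` is a
partition consisting of exactly `ν(σ)` parts, each of size `2·ν(γ)`; the size is
`|γ| + |ρ| + |σ|`. -/
def overCPSet (n : ℕ) :
    Set ((Multiset ℕ × Finset ℕ) × Multiset ℕ × (Multiset ℕ × Finset ℕ)) :=
  {t | (∀ x ∈ t.1.1, Odd x) ∧ t.1.2 ⊆ t.1.1.toFinset ∧
       (∀ x ∈ t.2.2.1, Odd x) ∧ t.2.2.2 ⊆ t.2.2.1.toFinset ∧
       t.2.1 = Multiset.replicate (Multiset.card t.2.2.1) (2 * Multiset.card t.1.1) ∧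
       t.1.1.sum + t.2.1.sum + t.2.2.1.sum = n}

/-- `ōcp^o_{1,1,2}(n)`: the number of `(1,1,2)`-overcopartitions of size `n` with `ν(γ)`
odd. -/
noncomputable def overCPOdd (n : ℕ) : ℕ :=
  {t ∈ overCPSet n | Odd (Multiset.card t.1.1)}.ncard

/-- `ōcp^e_{1,1,2}(n)`: the number of `(1,1,2)`-overcopartitions of size `n` with `ν(γ)`
even. -/
noncomputable def overCPEven (n : ℕ) : ℕ :=
  {t ∈ overCPSet n | Even (Multiset.card t.1.1)}.ncard


namespace OCP
open Finset

section Alg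
variable {K : Type*} [CommRing K]

/-- summand of the Bailey-Daum type series -/
noncomputable def ff (q t : K) (g : ℕ) : K :=
  ∏ i ∈ range g, (-q * (1 + t * (q^2)^i) * (1 - q * (q^2)^i) *
    Ring.inverse (1 - (q^2)^(i+1)) * Ring.inverse (1 + t * q * (q^2)^i))

/-- summand of the binomial series -/
noncomputable def hh (q x : K) (g : ℕ) : K :=
  ∏ i ∈ range g, (x * (1 - q * (q^2)^i) * Ring.inverse (1 - (q^2)^(i+1)))

lemma unit_add {q : K} (hq : IsNilpotent q) (z : K) : IsUnit (1 + q * z) := by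
  have : IsNilpotent (q * z) := Commute.isNilpotent_mul_right (Commute.all _ _) hq
  exact this.isUnit_one_add

lemma unit_a {q : K} (hq : IsNilpotent q) (i : ℕ) : IsUnit (1 - (q^2)^(i+1)) := by
  convert unit_add hq (-q^(2*i+1)) using 1; ring

lemma unit_b {q : K} (hq : IsNilpotent q) (t : K) (i : ℕ) : IsUnit (1 + t * q * (q^2)^i) := by
  convert unit_add hq (t * (q^2)^i) using 1; ring

lemma unit_c {q : K} (hq : IsNilpotent q) (i : ℕ) : IsUnit (1 + q * (q^2)^i) :=
  unit_add hq _

lemma ff_succ {q : K} (hq : IsNilpotent q) (t : K) (g : ℕ) :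
    ff q t (g+1) * (1 - (q^2)^(g+1)) * (1 + t * q * (q^2)^g) =
      -q * (1 + t * (q^2)^g) * (1 - q * (q^2)^g) * ff q t g := by
  have h1 := Ring.inverse_mul_cancel _ (unit_a hq g)
  have h2 := Ring.inverse_mul_cancel _ (unit_b hq t g)
  rw [ff, prod_range_succ, ← ff]
  generalize Ring.inverse (1 - (q^2)^(g+1)) = a at *
  generalize Ring.inverse (1 + t * q * (q^2)^g) = b at *
  linear_combination (-q * (1 + t * (q^2)^g) * (1 - q * (q^2)^g) * ff q t g) *
    (b * (1 + t * q * (q^2)^g) * h1 + h2)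

lemma hh_succ {q : K} (hq : IsNilpotent q) (x : K) (g : ℕ) :
    hh q x (g+1) * (1 - (q^2)^(g+1)) = x * (1 - q * (q^2)^g) * hh q x g := by
  have h1 := Ring.inverse_mul_cancel _ (unit_a hq g)
  rw [hh, prod_range_succ, ← hh]
  generalize Ring.inverse (1 - (q^2)^(g+1)) = a at *
  linear_combination (x * (1 - q * (q^2)^g) * hh q x g) * h1

lemma ff_zero' (q : K) (g : ℕ) : ff q 0 g = hh q (-q) g := by
  simp [ff, hh]

lemma ff_dvd (q t : K) (g : ℕ) : q^g ∣ ff q t g := by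
  unfold ff
  rw [← card_range g, ← prod_const, card_range]
  apply prod_dvd_prod_of_dvd
  intro i _
  exact ⟨-((1 + t * (q^2)^i) * (1 - q * (q^2)^i) *
    Ring.inverse (1 - (q^2)^(i+1)) * Ring.inverse (1 + t * q * (q^2)^i)), by ring⟩

lemma hh_dvd (q x : K) (g : ℕ) : x^g ∣ hh q x g := by
  unfold hh
  rw [← card_range g, ← prod_const, card_range]
  apply prod_dvd_prod_of_dvd
  intro i _
  exact ⟨((1 - q * (q^2)^i) * Ring.inverse (1 - (q^2)^(i+1))), by ring⟩

lemma hh_mul (q : K) (x : K) (g : ℕ) :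
    hh q (x * q^2) g = hh q x g * (q^2)^g := by
  unfold hh
  rw [← card_range g, ← prod_const, card_range, ← prod_mul_distrib]
  apply prod_congr rfl
  intros; ring

lemma ff_shift {q : K} (hq : IsNilpotent q) (t : K) (g : ℕ) :
    ff q (t * (q^2)^2) g * (1+t) * (1+t*q^2) * (1 + t*q*(q^2)^g) * (1 + t*q*(q^2)^(g+1)) =
    ff q t g * (1 + t*(q^2)^g) * (1+t*(q^2)^(g+1)) * (1+t*q) * (1+t*q*q^2) := by
  induction g with
  | zero => simp [ff]
  | succ g ih =>
    have e1 := ff_succ hq t g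
    have e2 := ff_succ hq (t * (q^2)^2) g
    have hu := (unit_a hq g).mul ((unit_b hq t g))
    apply hu.mul_right_cancel
    have hu3 := unit_b hq (t * (q^2)^2) g
    apply hu3.mul_right_cancel
    simp only [pow_succ (q^2)] at *
    simp only [pow_zero, one_mul] at *
    generalize (q^2)^g = y at *
    generalize ff q (t * (q^2*q^2)) (g+1) = f1' at *
    generalize ff q (t * (q^2*q^2)) g = f1 at *
    generalize ff q t (g+1) = f' at *
    generalize ff q t g = f at *
    linear_combination ((1+t) * (1+t*q^2) * (1 + t*q*(y*q^2)) * (1 + t*q*(y*q^2*q^2))*(1+t*q*y)) * e2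
      - ((1 + t*(y*q^2)) * (1+t*(y*q^2*q^2)) * (1+t*q) * (1+t*q*q^2) * (1 + t * (q^2*q^2) * q*y)) * e1
      + (-q * (1 + t*(q^2*q^2)*y) * (1-q*y) * (1 + t*(q^2*q^2)*q*y)) * ih

lemma ff_tele {q : K} (hq : IsNilpotent q) (t : K) (n : ℕ) :
    (1+t) * (1 + t*q*(q^2)^n) * ∑ g ∈ range n,
      ((1+t*q)*(1+t*q*q^2) * ff q t g - (1+t*q^2)^2 * ff q (t*(q^2)^2) g) =
    -t*(1-q)*(1+t*q)*(1+t*q*q^2) * ff q t n * (1 - (q^2)^n) := by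
  induction n with
  | zero => simp
  | succ g ih =>
    have e1 := ff_succ hq t g
    have e2 := ff_shift hq t g
    rw [sum_range_succ]
    apply (unit_b hq t g).mul_right_cancel
    simp only [pow_succ (q^2)] at *
    simp only [pow_zero, one_mul] at *
    generalize (q^2)^g = y at *
    generalize ff q (t * (q^2*q^2)) g = f1 at *
    generalize ff q t (g+1) = f' at *
    generalize ff q t g = f at *
    linear_combination (1 + t*q*(y*q^2)) * ih - (1+t*q^2) * e2 + t*(1-q)*(1+t*q)*(1+t*q*q^2) * e1

lemma S_step {q : K} {N : ℕ} (hN : q^N = 0) (t : K) (ht : IsUnit (1+t)) :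
    (1+t*q)*(1+t*q*q^2) * ∑ g ∈ range N, ff q t g =
      (1+t*q^2)^2 * ∑ g ∈ range N, ff q (t*(q^2)^2) g := by
  have hq : IsNilpotent q := ⟨N, hN⟩
  have h := ff_tele hq t N
  have h0 : ff q t N = 0 := by
    have := ff_dvd q t N
    rw [hN] at this; exact zero_dvd_iff.mp this
  rw [h0, sum_sub_distrib, ← mul_sum, ← mul_sum] at h
  have := (ht.mul (unit_b hq t N)).mul_left_cancel (h.trans (by ring : _ = _ * (0:K)))
  exact sub_eq_zero.mp this

lemma S_iter {q : K} {N : ℕ} (hN : q^N = 0) (h2 : IsUnit (2:K)) (k : ℕ) :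
    (∏ i ∈ range (2*k), (1 + q * (q^2)^i)) * ∑ g ∈ range N, ff q 1 g =
    (∏ i ∈ range k, (1 + (q^2)^(2*i+1)))^2 * ∑ g ∈ range N, ff q ((q^2)^(2*k)) g := by
  have hq : IsNilpotent q := ⟨N, hN⟩
  induction k with
  | zero => simp
  | succ k ih =>
    have hu : IsUnit (1 + (q^2)^(2*k)) := by
      cases k with
      | zero => simpa [one_add_one_eq_two] using h2
      | succ k => convert unit_add hq (q^(4*k+3)) using 1; ring
    have h := S_step hN _ hu
    rw [show 2*(k+1) = 2*k+1+1 by ring, prod_range_succ, prod_range_succ, prod_range_succ]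
    have e : (q^2)^(2*k) * (q^2)^2 = (q^2)^(2*k+1+1) := by ring
    rw [e] at h
    generalize ∑ g ∈ range N, ff q ((q^2)^(2*k+1+1)) g = s at *
    simp only [pow_succ (q^2) (2*k)]
    linear_combination (1 + q * (q^2)^(2*k)) * (1 + q * ((q^2)^(2*k)*q^2)) * ih +
      (∏ i ∈ range k, (1 + (q^2)^(2*i+1)))^2 * h

lemma h_tele {q : K} (hq : IsNilpotent q) (x : K) (n : ℕ) :
    (1-x) * ∑ g ∈ range n, hh q x g - (1 - q*x) * ∑ g ∈ range n, hh q (x*q^2) g =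
     - hh q x n * (1 - (q^2)^n) := by
  induction n with
  | zero => simp
  | succ n ih =>
    rw [sum_range_succ, sum_range_succ, hh_mul q]
    have := hh_succ hq x n
    linear_combination ih + this

lemma h_iter {q : K} {N : ℕ} (hN : q^N = 0) (k : ℕ) :
    (∏ i ∈ range k, (1 + q * (q^2)^i)) * ∑ g ∈ range N, hh q (-q) g =
    (∏ i ∈ range k, (1 + (q^2)^(i+1))) * ∑ g ∈ range N, hh q (-q * (q^2)^k) g := by
  have hq : IsNilpotent q := ⟨N, hN⟩
  induction k with
  | zero => simp
  | succ k ih =>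
    have h := h_tele hq (-q * (q^2)^k) N
    have h0 : hh q (-q * (q^2)^k) N = 0 := by
      have := hh_dvd q (-q * (q^2)^k) N
      rw [mul_pow, neg_pow, hN] at this
      simpa using this
    rw [h0] at h
    rw [prod_range_succ, prod_range_succ]
    have e : -q * (q^2)^k * q^2 = -q * (q^2)^(k+1) := by ring
    rw [e] at h
    linear_combination (1 + q * (q^2)^k) * ih + (∏ i ∈ range k, (1 + (q^2)^(i+1))) * h

lemma pow_zero_of_le {q : K} {N : ℕ} (hN : q^N = 0) {m : ℕ} (h : N ≤ m) : (q^2)^m = 0 := by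
  rw [← pow_mul]; exact pow_eq_zero_of_le (by omega) hN

lemma S_total {q : K} {N : ℕ} (hN : q^N = 0) (hN0 : 0 < N) (h2 : IsUnit (2:K)) :
    (∏ i ∈ range (2*N), (1 + q * (q^2)^i))^2 * ∑ g ∈ range N, ff q 1 g =
    (∏ i ∈ range N, (1 + (q^2)^(2*i+1)))^2 * ∏ i ∈ range (2*N), (1 + (q^2)^(i+1)) := by
  have h := S_iter hN h2 N
  have h' := h_iter hN (2*N)
  rw [pow_zero_of_le hN (by omega)] at h h'
  have e : ∑ g ∈ range N, hh q (-q * 0) g = 1 := by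
    rw [Finset.sum_eq_single_of_mem 0 (by simpa using hN0)]
    · simp [hh]
    · intro b _ hb
      have := hh_dvd q (-q*0) b
      rw [mul_zero, zero_pow hb] at this
      simpa using this
  rw [e] at h'
  simp only [ff_zero'] at h
  linear_combination (∏ i ∈ range (2*N), (1 + q * (q^2)^i)) * h +
    (∏ i ∈ range N, (1 + (q^2)^(2*i+1)))^2 * h'

lemma A_dvd {q : K} (hq : IsNilpotent q) (A : ℕ → K)
    (hA : ∀ g, A (g+1) * (1 - (q^2)^(g+1)) = q * (1 + (q^2)^g) * A g) (g : ℕ) :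
    q^g ∣ A g := by
  induction g with
  | zero => simp
  | succ g ih =>
    rw [← (unit_a hq g).dvd_mul_right, hA, pow_succ']
    rw [mul_assoc]
    exact mul_dvd_mul_left _ (ih.mul_left _)

theorem alg_main {q : K} {N : ℕ} (hN : q^N = 0) (hN0 : 0 < N) (h2 : IsUnit (2:K)) (A : ℕ → K)
    (hA0 : A 0 = 1) (hA : ∀ g, A (g+1) * (1 - (q^2)^(g+1)) = q * (1 + (q^2)^g) * A g) :
    (∑ g ∈ range N, ∑ s ∈ range N, (-1)^g * A g * A s * (q^2)^(g*s)) *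
      ∏ i ∈ range (2*N), (1 - (q^2)^(2*i+1)) =
    (∏ i ∈ range N, (1 + (q^2)^(2*i+1)))^2 * ∏ i ∈ range (2*N), (1 + (q^2)^(i+1)) := by
  have hq : IsNilpotent q := ⟨N, hN⟩
  have hAN : A N = 0 := by
    have := A_dvd hq A hA N
    rw [hN] at this; exact zero_dvd_iff.mp this
  set P : ℕ → K := fun g => ∑ s ∈ range N, A s * ((q^2)^g)^s with hP
  have hPs : ∀ g, P g * (1 - q * (q^2)^g) = (1 + q * (q^2)^g) * P (g+1) := by
    intro g
    have key : ∀ n, (∑ s ∈ range n, A s * ((q^2)^g)^s) * (1 - q * (q^2)^g) -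
        (1 + q * (q^2)^g) * (∑ s ∈ range n, A s * ((q^2)^(g+1))^s) =
        - A n * ((q^2)^g)^n * (1 - (q^2)^n) := by
      intro n
      induction n with
      | zero => simp
      | succ n ih =>
        rw [sum_range_succ, sum_range_succ]
        have e : ((q^2)^(g+1))^n = ((q^2)^g)^n * (q^2)^n := by ring
        rw [e]
        have := hA n
        simp only [pow_succ ((q^2)^g) n]
        generalize (q^2)^g = z at *
        linear_combination ih + z^n * z * this
    have := key N
    rw [hAN] at this
    linear_combination this
  have hP0 : ∀ g, P g * ∏ i ∈ range g, (1 + q * (q^2)^i) = P g * ∏ i ∈ range g, (1 + q * (q^2)^i) :=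
    fun _ => rfl
  have hPM : ∀ g, P 0 * ∏ i ∈ range g, (1 - q * (q^2)^i) = 
      (∏ i ∈ range g, (1 + q * (q^2)^i)) * P g := by
    intro g
    induction g with
    | zero => simp
    | succ g ih =>
      rw [prod_range_succ, prod_range_succ]
      linear_combination (1 - q * (q^2)^g) * ih + (∏ i ∈ range g, (1 + q * (q^2)^i)) * hPs g
  have hPe : P (2*N) = 1 := by
    simp only [hP]
    rw [pow_zero_of_le hN (by omega)]
    rw [Finset.sum_eq_single_of_mem 0 (by simpa using hN0)]
    · simp [hA0]
    · intro b _ hb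
      simp [hb]
  have hu : ∀ g, (-1)^g * A g * P g = P 0 * ff q 1 g := by
    intro g
    induction g with
    | zero => simp [hA0, ff]
    | succ g ih =>
      have e1 := ff_succ hq 1 g
      have e2 := hA g
      have e3 := hPs g
      apply ((unit_a hq g).mul (unit_b hq 1 g)).mul_right_cancel
      linear_combination (-P 0) * e1 + (-1)^(g+1) * P (g+1) * (1 + 1 * q * (q^2)^g) * e2 
        - (-1)^(g+1) * q * (1 + (q^2)^g) * A g * e3
        -q * (1 + 1 * (q^2)^g) * (1 - q * (q^2)^g) * ih
  have hF : (∑ g ∈ range N, ∑ s ∈ range N, (-1)^g * A g * A s * (q^2)^(g*s)) =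
      P 0 * ∑ g ∈ range N, ff q 1 g := by
    rw [mul_sum]
    refine sum_congr rfl fun g _ => ?_
    rw [← hu, hP, mul_sum]
    refine sum_congr rfl fun s _ => ?_
    rw [pow_mul]; ring
  have hprod : ∏ i ∈ range (2*N), (1 - (q^2)^(2*i+1)) =
      (∏ i ∈ range (2*N), (1 - q * (q^2)^i)) * ∏ i ∈ range (2*N), (1 + q * (q^2)^i) := by
    rw [← prod_mul_distrib]
    refine prod_congr rfl fun i _ => ?_
    ring
  have hh := hPM (2*N)
  rw [hPe, mul_one] at hh
  rw [hF, hprod, ← S_total hN hN0 h2]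
  linear_combination (∏ i ∈ range (2*N), (1 + q * (q^2)^i)) * (∑ g ∈ range N, ff q 1 g) * hh

end Alg

/-- overpartitions into `g` odd parts, of size `m` -/
def OO (g m : ℕ) : Set (Multiset ℕ × Finset ℕ) :=
  {a | (∀ x ∈ a.1, Odd x) ∧ a.2 ⊆ a.1.toFinset ∧ Multiset.card a.1 = g ∧ a.1.sum = m}

lemma card_le_sum {l : Multiset ℕ} (h : ∀ x ∈ l, Odd x) : Multiset.card l ≤ l.sum := by
  have := Multiset.card_nsmul_le_sum (s := l) (a := 1) (fun x hx => (h x hx).pos)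
  simpa using this

lemma finite_le (n : ℕ) : {a : Multiset ℕ × Finset ℕ |
    (∀ x ∈ a.1, Odd x) ∧ a.2 ⊆ a.1.toFinset ∧ a.1.sum ≤ n}.Finite := by
  refine Set.Finite.subset ((Set.finite_Iic (n • Multiset.range (n+1))).prod
    (Set.finite_Iic (Finset.range (n+1)))) ?_
  rintro ⟨l, S⟩ ⟨h1, h2, h3⟩
  dsimp only at h1 h2 h3
  have hx : ∀ x ∈ l, x < n + 1 := fun x hx => by
    have := Multiset.single_le_sum (fun _ _ => Nat.zero_le _) x hx
    omega
  refine ⟨?_, ?_⟩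
  · simp only [Set.mem_Iic]
    rw [Multiset.le_iff_count]
    intro x
    by_cases hxl : x ∈ l
    · rw [Multiset.count_nsmul, Multiset.count_eq_one_of_mem (Multiset.nodup_range _)
        (Multiset.mem_range.2 (hx x hxl))]
      have := Multiset.count_le_card x l
      have := card_le_sum h1
      omega
    · rw [Multiset.count_eq_zero_of_notMem hxl]; omega
  · simp only [Set.mem_Iic]
    intro x hxS
    exact Finset.mem_range.2 (hx x (Multiset.mem_toFinset.1 (h2 hxS)))

lemma OO_finite (g m : ℕ) : (OO g m).Finite :=
  (finite_le m).subset (fun _ h => ⟨h.1, h.2.1, h.2.2.2.le⟩)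

/-- shift by two -/
def sh (a : Multiset ℕ × Finset ℕ) : Multiset ℕ × Finset ℕ :=
  (a.1.map (· + 2), a.2.map (addRightEmbedding 2))

lemma sh_inj : Function.Injective sh := by
  rintro ⟨a, b⟩ ⟨c, d⟩ h
  simp only [sh, Prod.mk.injEq] at h
  have h1 := Multiset.map_injective (add_left_injective 2) h.1
  have h2 := Finset.map_injective _ h.2
  rw [h1, h2]

lemma sh_mem (g m : ℕ) (a) : sh a ∈ OO g (m + 2 * g) ↔ a ∈ OO g m := by
  obtain ⟨l, S⟩ := a
  simp only [sh, OO, Set.mem_ofPred_eq, Multiset.card_map, Multiset.sum_map_add,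
    Multiset.map_id', Multiset.map_const', Multiset.sum_replicate, smul_eq_mul]
  have e1 : (∀ x ∈ Multiset.map (fun x => x + 2) l, Odd x) ↔ ∀ x ∈ l, Odd x := by
    simp [Nat.odd_add]
  have e2 : S.map (addRightEmbedding 2) ⊆ (Multiset.map (fun x => x+2) l).toFinset ↔
      S ⊆ l.toFinset := by
    simp [Finset.subset_iff]
  rw [e1, e2]
  constructor
  · rintro ⟨h1, h2, h3, h4⟩; exact ⟨h1, h2, h3, by subst h3; omega⟩
  · rintro ⟨h1, h2, h3, h4⟩; exact ⟨h1, h2, h3, by subst h3; omega⟩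

lemma one_notMem_sh (a) : 1 ∉ (sh a).1 := by
  simp [sh]

lemma exists_sh {g m : ℕ} {a} (h : a ∈ OO g m) (h1 : 1 ∉ a.1) :
    ∃ b, sh b = a ∧ 2 * g ≤ m ∧ b ∈ OO g (m - 2 * g) := by
  have h3 : ∀ x ∈ a.1, 2 ≤ x := by
    intro x hx
    have := (h.1 x hx).pos
    have : x ≠ 1 := fun e => h1 (e ▸ hx)
    omega
  have hb : sh (a.1.map (· - 2), a.2.image (· - 2)) = a := by
    refine Prod.ext ?_ ?_
    · simp only [sh, Multiset.map_map]
      conv_rhs => rw [← Multiset.map_id a.1]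
      refine Multiset.map_congr rfl fun x hx => ?_
      have := h3 x hx
      simp; omega
    · ext x
      simp only [sh, Finset.mem_map, Finset.mem_image, addRightEmbedding_apply]
      constructor
      · rintro ⟨_, ⟨y, hy, rfl⟩, rfl⟩
        have := h3 y (Multiset.mem_toFinset.1 (h.2.1 hy))
        rwa [Nat.sub_add_cancel this]
      · intro hx
        have := h3 x (Multiset.mem_toFinset.1 (h.2.1 hx))
        exact ⟨x - 2, ⟨x, hx, rfl⟩, by omega⟩
  have hs : 2 * g ≤ m := by
    have := Multiset.card_nsmul_le_sum (s := a.1) (a := 2) h3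
    rw [h.2.2.1, h.2.2.2, smul_eq_mul] at this
    omega
  refine ⟨_, hb, hs, ?_⟩
  rw [← sh_mem, hb, Nat.sub_add_cancel hs]
  exact h

/-- add a part one -/
def ad (a : Multiset ℕ × Finset ℕ) : Multiset ℕ × Finset ℕ := (1 ::ₘ a.1, a.2)

/-- shift and add an overlined part one -/
def ao (a : Multiset ℕ × Finset ℕ) : Multiset ℕ × Finset ℕ :=
  (1 ::ₘ (sh a).1, insert 1 (sh a).2)

lemma ad_inj : Function.Injective ad := by
  rintro ⟨a, b⟩ ⟨c, d⟩ h
  simpa [ad] using h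

lemma one_notMem_sh2 (a) : 1 ∉ (sh a).2 := by
  simp [sh]

lemma ao_inj : Function.Injective ao := by
  intro a b h
  simp only [ao, Prod.mk.injEq, Multiset.cons_inj_right] at h
  apply sh_inj
  refine Prod.ext h.1 ?_
  rw [← Finset.erase_insert (one_notMem_sh2 a), h.2, Finset.erase_insert (one_notMem_sh2 b)]

lemma OO_succ (g m : ℕ) : OO (g+1) m =
    (sh '' {a | 2*(g+1) ≤ m ∧ a ∈ OO (g+1) (m - 2*(g+1))} ∪
     ad '' {a | 1 ≤ m ∧ a ∈ OO g (m-1)}) ∪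
     ao '' {a | 2*g+1 ≤ m ∧ a ∈ OO g (m - (2*g+1))} := by
  ext a
  constructor
  · intro h
    by_cases h1 : 1 ∈ a.1
    · have hs := h.2.2.2
      have hc := h.2.2.1
      obtain ⟨l, hl⟩ := Multiset.exists_cons_of_mem h1
      rw [hl] at hs hc
      simp only [Multiset.sum_cons, Multiset.card_cons, Nat.add_right_cancel_iff] at hs hc
      have hodd : ∀ x ∈ l, Odd x := fun x hx => h.1 x (by rw [hl]; exact Multiset.mem_cons_of_mem hx)
      by_cases hS : a.2 ⊆ l.toFinset
      · left; right
        exact ⟨(l, a.2), ⟨by omega, hodd, hS, hc, by dsimp only; omega⟩, Prod.ext hl.symm rfl⟩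
      · right
        have hS2 := h.2.1
        rw [hl, Multiset.toFinset_cons] at hS2
        have hl1 : 1 ∉ l := by
          intro h; apply hS
          rwa [Finset.insert_eq_self.2 (Multiset.mem_toFinset.2 h)] at hS2
        have h1S : 1 ∈ a.2 := by
          by_contra h; apply hS
          exact (Finset.subset_insert_iff_of_notMem h).1 hS2
        have hmem : (l, a.2.erase 1) ∈ OO g (m-1) :=
          ⟨hodd, Finset.subset_insert_iff.1 hS2, hc, by dsimp only; omega⟩
        obtain ⟨b, hb, hle, hbm⟩ := exists_sh hmem hl1
        refine ⟨b, ⟨by omega, ?_⟩, ?_⟩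
        · rwa [show m - (2*g+1) = m - 1 - 2*g by omega]
        · simp only [ao, hb]
          exact Prod.ext hl.symm (Finset.insert_erase h1S)
    · left; left
      obtain ⟨b, hb, hle, hbm⟩ := exists_sh h h1
      exact ⟨b, ⟨hle, hbm⟩, hb⟩
  · rintro ((⟨b, ⟨hle, hb⟩, rfl⟩ | ⟨b, ⟨hle, hb⟩, rfl⟩) | ⟨b, ⟨hle, hb⟩, rfl⟩)
    · rw [← sh_mem, Nat.sub_add_cancel hle] at hb
      exact hb
    · obtain ⟨h1, h2, h3, h4⟩ := hb
      refine ⟨?_, ?_, ?_, ?_⟩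
      · simpa [ad] using h1
      · simp only [ad, Multiset.toFinset_cons]
        exact h2.trans (Finset.subset_insert _ _)
      · simp [ad, h3]
      · simp only [ad, Multiset.sum_cons, h4]; omega
    · rw [← sh_mem] at hb
      obtain ⟨h1, h2, h3, h4⟩ := hb
      refine ⟨?_, ?_, ?_, ?_⟩
      · simpa [ao] using h1
      · simp only [ao, Multiset.toFinset_cons]
        exact Finset.insert_subset_insert _ h2
      · simp [ao, h3]
      · simp only [ao, Multiset.sum_cons, h4]; omega

lemma ncard_guard {α : Type*} (p : Prop) [Decidable p] (s : Set α) :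
    {a | p ∧ a ∈ s}.ncard = if p then s.ncard else 0 := by
  by_cases h : p <;> simp [h]

lemma guard_finite {α : Type*} (p : Prop) {s : Set α} (h : s.Finite) : {a | p ∧ a ∈ s}.Finite :=
  h.subset fun _ h => h.2

lemma OO_rec (g m : ℕ) : (OO (g+1) m).ncard =
    (if 2*(g+1) ≤ m then (OO (g+1) (m - 2*(g+1))).ncard else 0) +
    (if 1 ≤ m then (OO g (m-1)).ncard else 0) +
    (if 2*g+1 ≤ m then (OO g (m - (2*g+1))).ncard else 0) := by
  rw [OO_succ]
  have f1 := (guard_finite (2*(g+1) ≤ m) (OO_finite (g+1) (m - 2*(g+1)))).image sh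
  have f2 := (guard_finite (1 ≤ m) (OO_finite g (m - 1))).image ad
  have f3 := (guard_finite (2*g+1 ≤ m) (OO_finite g (m - (2*g+1)))).image ao
  rw [Set.ncard_union_eq ?_ (f1.union f2) f3, Set.ncard_union_eq ?_ f1 f2,
    Set.ncard_image_of_injective _ sh_inj, Set.ncard_image_of_injective _ ad_inj,
    Set.ncard_image_of_injective _ ao_inj, ncard_guard, ncard_guard, ncard_guard]
  · rw [Set.disjoint_left]
    rintro _ ⟨a, _, rfl⟩ ⟨b, _, hb⟩
    apply one_notMem_sh a
    rw [← hb]; simp [ad]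
  · rw [Set.disjoint_left]
    rintro _ (⟨a, _, rfl⟩ | ⟨a, ha, rfl⟩) ⟨b, _, hb⟩
    · apply one_notMem_sh a
      rw [← hb]; simp [ao]
    · simp only [ao, ad, Prod.mk.injEq, Multiset.cons_inj_right] at hb
      have h1 : 1 ∈ a.2 := by rw [← hb.2]; simp
      have h2 := Multiset.mem_toFinset.1 (ha.2.2.1 h1)
      rw [← hb.1] at h2
      exact one_notMem_sh b h2

lemma OO_zero (m : ℕ) : (OO 0 m).ncard = if m = 0 then 1 else 0 := by
  split_ifs with h
  · rw [Set.ncard_eq_one]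
    refine ⟨(0, ∅), ?_⟩
    ext ⟨l, S⟩
    simp only [OO, Set.mem_ofPred_eq, Set.mem_singleton_iff, Prod.mk.injEq, Multiset.card_eq_zero]
    constructor
    · rintro ⟨_, h2, rfl, _⟩
      simpa using h2
    · rintro ⟨rfl, rfl⟩
      simp [h]
  · rw [Set.ncard_eq_zero (OO_finite _ _)]
    ext ⟨l, S⟩
    simp only [OO, Set.mem_ofPred_eq, Multiset.card_eq_zero, Set.mem_empty_iff_false, iff_false]
    rintro ⟨_, h2, rfl, h3⟩
    exact h h3.symm

/-- generating function -/
noncomputable def AA (g : ℕ) : PowerSeries ℚ := PowerSeries.mk fun m => ((OO g m).ncard : ℚ)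

open PowerSeries in
lemma AA_zero : AA 0 = 1 := by
  ext m
  simp only [AA, coeff_mk, OO_zero, coeff_one]
  split_ifs <;> simp

open PowerSeries in
lemma AA_succ (g : ℕ) : AA (g+1) * (1 - (X^2)^(g+1)) = X * (1 + (X^2)^g) * AA g := by
  have : AA (g+1) = X^(2*(g+1)) * AA (g+1) + X^1 * AA g + X^(2*g+1) * AA g := by
    ext m
    simp only [map_add, coeff_X_pow_mul']
    simp only [AA, coeff_mk]
    rw [OO_rec]
    push_cast
    rfl
  rw [← pow_mul, ← pow_mul]
  linear_combination this

/-- pieces of overCPSet -/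
def BB (n g s : ℕ) : Set ((Multiset ℕ × Finset ℕ) × Multiset ℕ × (Multiset ℕ × Finset ℕ)) :=
  {t ∈ overCPSet n | Multiset.card t.1.1 = g ∧ Multiset.card t.2.2.1 = s}

lemma CP_finite (n : ℕ) : (overCPSet n).Finite := by
  refine Set.Finite.subset (((finite_le n).prod (finite_le n)).image
    (fun p => (p.1, Multiset.replicate (Multiset.card p.2.1) (2 * Multiset.card p.1.1), p.2))) ?_
  rintro ⟨a, r, b⟩ ⟨h1, h2, h3, h4, h5, h6⟩
  dsimp only at *
  exact ⟨(a, b), ⟨⟨h1, h2, by dsimp only; omega⟩, ⟨h3, h4, by dsimp only; omega⟩⟩, by simp [h5]⟩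

open PowerSeries in
lemma BB_card (n g s : ℕ) : ((BB n g s).ncard : ℚ) = coeff n (AA g * AA s * (X^2)^(g*s)) := by
  rw [← pow_mul, coeff_mul_X_pow']
  have hsum : ∀ t ∈ BB n g s, t.1.1.sum + t.2.2.1.sum + 2*(g*s) = n := by
    rintro t ⟨⟨h1, h2, h3, h4, h5, h6⟩, h7, h8⟩
    rw [h5, Multiset.sum_replicate, h7, h8, smul_eq_mul] at h6
    linarith
  have hfin : (BB n g s).Finite := (CP_finite n).subset fun _ h => h.1
  split_ifs with h
  · rw [coeff_mul, Set.ncard_eq_toFinset_card _ hfin,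
      Finset.card_eq_sum_card_fiberwise (f := fun t => (t.1.1.sum, t.2.2.1.sum))
        (t := Finset.HasAntidiagonal.antidiagonal (n - 2*(g*s)))]
    · push_cast
      refine Finset.sum_congr rfl fun p hp => ?_
      rw [Finset.HasAntidiagonal.mem_antidiagonal] at hp
      simp only [AA, coeff_mk]
      rw [← Nat.cast_mul, ← Set.ncard_prod, Nat.cast_inj, ← Set.ncard_coe_finset]
      refine Set.ncard_congr (fun t _ => (t.1, t.2.2)) ?_ ?_ ?_
      · rintro ⟨a, r, b⟩ ht
        simp only [Finset.coe_filter, Set.Finite.mem_toFinset, Set.mem_ofPred_eq] at ht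
        obtain ⟨⟨⟨h1, h2, h3, h4, h5, h6⟩, h7, h8⟩, rfl⟩ := ht
        exact ⟨⟨h1, h2, h7, rfl⟩, ⟨h3, h4, h8, rfl⟩⟩
      · rintro ⟨a, r, b⟩ ⟨a', r', b'⟩ ht ht' he
        simp only [Finset.coe_filter, Set.Finite.mem_toFinset, Set.mem_ofPred_eq] at ht ht'
        simp only [Prod.mk.injEq] at he
        have e1 := ht.1.1.2.2.2.2.1
        have e2 := ht'.1.1.2.2.2.2.1
        dsimp only at e1 e2
        rw [e1, e2, he.1, he.2]
      · rintro ⟨a, b⟩ ⟨⟨h1, h2, h3, h4⟩, ⟨k1, k2, k3, k4⟩⟩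
        dsimp only at *
        refine ⟨(a, Multiset.replicate s (2 * g), b), ?_, rfl⟩
        simp only [Finset.coe_filter, Set.Finite.mem_toFinset, Set.mem_ofPred_eq]
        refine ⟨⟨⟨h1, h2, k1, k2, by simp only [h3, k3], ?_⟩, h3, k3⟩, by rw [h4, k4]⟩
        dsimp only
        rw [Multiset.sum_replicate, h4, k4, smul_eq_mul]
        have : s * (2*g) = 2*(g*s) := by ring
        omega
    · intro t ht
      have := hsum t (by simpa using ht)
      simp only [Finset.mem_coe, Finset.HasAntidiagonal.mem_antidiagonal]
      omega
  · rw [Nat.cast_eq_zero, Set.ncard_eq_zero hfin]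
    ext t
    simp only [Set.mem_empty_iff_false, iff_false]
    intro ht
    have := hsum t ht
    omega

lemma CP_pred (n : ℕ) (p : ℕ → Prop) [DecidablePred p] :
    {t ∈ overCPSet n | p (Multiset.card t.1.1)}.ncard =
      ∑ g ∈ Finset.range (n+1), ∑ s ∈ Finset.range (n+1), if p g then (BB n g s).ncard else 0 := by
  have hfin : {t ∈ overCPSet n | p (Multiset.card t.1.1)}.Finite :=
    (CP_finite n).subset fun _ h => h.1
  rw [← Finset.sum_product', Set.ncard_eq_toFinset_card _ hfin,
      Finset.card_eq_sum_card_fiberwise (f := fun t => (Multiset.card t.1.1, Multiset.card t.2.2.1))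
        (t := Finset.range (n+1) ×ˢ Finset.range (n+1))]
  · refine Finset.sum_congr rfl fun x _ => ?_
    rw [← Set.ncard_coe_finset]
    split_ifs with h
    · congr 1
      ext t
      simp only [Finset.coe_filter, Set.Finite.mem_toFinset, Set.mem_ofPred_eq, BB, Prod.ext_iff]
      constructor
      · rintro ⟨⟨h1, h2⟩, h3⟩; exact ⟨h1, h3⟩
      · rintro ⟨h1, h2, h3⟩; exact ⟨⟨h1, by rwa [h2]⟩, h2, h3⟩
    · rw [Set.ncard_eq_zero (Finset.finite_toSet _)]
      ext t
      simp only [Finset.coe_filter, Set.Finite.mem_toFinset, Set.mem_ofPred_eq, Prod.ext_iff,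
        Set.mem_empty_iff_false, iff_false]
      rintro ⟨⟨h1, h2⟩, h3, h4⟩
      exact h (h3 ▸ h2)
  · intro t ht
    have ht' : t ∈ overCPSet n := by
      have := (Set.Finite.mem_toFinset hfin).1 ht
      exact this.1
    obtain ⟨h1, h2, h3, h4, h5, h6⟩ := ht'
    have := card_le_sum h1
    have := card_le_sum h3
    simp only [Finset.coe_product, Finset.coe_range, Set.mem_prod, Set.mem_Iio]
    omega

open PowerSeries in
lemma diff_eq (n : ℕ) : (overCPEven n : ℚ) - overCPOdd n =
    coeff n (∑ g ∈ Finset.range (n+1), ∑ s ∈ Finset.range (n+1),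
      (-1)^g * AA g * AA s * (X^2)^(g*s)) := by
  rw [overCPEven, overCPOdd, CP_pred n Even, CP_pred n Odd]
  push_cast
  rw [← Finset.sum_sub_distrib, map_sum]
  refine Finset.sum_congr rfl fun g _ => ?_
  rw [← Finset.sum_sub_distrib, map_sum]
  refine Finset.sum_congr rfl fun s _ => ?_
  rw [BB_card]
  rcases Nat.even_or_odd g with h | h
  · rw [if_pos h, if_neg (Nat.not_odd_iff_even.2 h), h.neg_one_pow]
    simp
  · rw [if_pos h, if_neg (Nat.not_even_iff_odd.2 h), h.neg_one_pow]
    simp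

/-- nonnegativity of the low coefficients -/
def NN (N : ℕ) (f : PowerSeries ℚ) : Prop := ∀ m < N, 0 ≤ PowerSeries.coeff m f

lemma NN_mul {N : ℕ} {f g : PowerSeries ℚ} (hf : NN N f) (hg : NN N g) : NN N (f * g) := by
  intro m hm
  rw [PowerSeries.coeff_mul]
  refine Finset.sum_nonneg fun p hp => ?_
  rw [Finset.HasAntidiagonal.mem_antidiagonal] at hp
  exact mul_nonneg (hf _ (by omega)) (hg _ (by omega))

lemma NN_one (N : ℕ) : NN N 1 := by
  intro m _
  rw [PowerSeries.coeff_one]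
  split_ifs <;> simp

lemma NN_one_add (N k : ℕ) : NN N (1 + PowerSeries.X^k) := by
  intro m hm
  rw [map_add, PowerSeries.coeff_X_pow]
  have := NN_one N m hm
  refine add_nonneg this ?_
  split_ifs <;> simp

lemma NN_prod {N : ℕ} (s : Finset ℕ) (f : ℕ → PowerSeries ℚ) (h : ∀ i, NN N (f i)) :
    NN N (∏ i ∈ s, f i) :=
  Finset.prod_induction f (NN N) (fun _ _ => NN_mul) (NN_one N) (fun i _ => h i)

lemma NN_cancel {N k : ℕ} (hk : 0 < k) {f : PowerSeries ℚ}
    (h : NN N (f * (1 - PowerSeries.X^k))) : NN N f := by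
  intro m
  induction m using Nat.strong_induction_on with
  | _ m ih =>
    intro hm
    have h1 := h m hm
    rw [mul_sub, mul_one, map_sub, PowerSeries.coeff_mul_X_pow'] at h1
    split_ifs at h1 with hkm
    · have := ih (m-k) (by omega) (by omega)
      linarith
    · linarith

lemma NN_cancel_prod {N : ℕ} (M : ℕ) {f : PowerSeries ℚ}
    (h : NN N (f * ∏ i ∈ Finset.range M, (1 - (PowerSeries.X^2)^(2*i+1)))) : NN N f := by
  induction M with
  | zero => simpa using h
  | succ M ih =>
    rw [Finset.prod_range_succ, ← mul_assoc, ← pow_mul] at h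
    exact ih (NN_cancel (by omega) h)

open PowerSeries in
lemma diff_nonneg (n : ℕ) : (overCPOdd n : ℚ) ≤ overCPEven n := by
  rw [← sub_nonneg, diff_eq]
  set F := (∑ g ∈ Finset.range (n+1), ∑ s ∈ Finset.range (n+1),
      (-1)^g * AA g * AA s * (X^2)^(g*s)) with hF
  suffices NN (n+1) F from this n (by omega)
  apply NN_cancel_prod (2*(n+1))
  let I : Ideal (PowerSeries ℚ) := Ideal.span {X^(n+1)}
  let φ := Ideal.Quotient.mk I
  have hX : φ X ^ (n+1) = 0 := by
    rw [← map_pow, Ideal.Quotient.eq_zero_iff_mem]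
    exact Ideal.mem_span_singleton_self _
  have h2 : IsUnit (2 : PowerSeries ℚ ⧸ I) := by
    have : IsUnit (2 : PowerSeries ℚ) := by
      rw [← map_ofNat (PowerSeries.C (R := ℚ)) 2]
      exact (show IsUnit (2:ℚ) by norm_num).map (PowerSeries.C (R := ℚ))
    have h3 := this.map φ
    rwa [map_ofNat] at h3
  have key := alg_main hX (by omega) h2 (fun g => φ (AA g)) (by simp [AA_zero]) (by
    intro g
    have := congrArg φ (AA_succ g)
    simpa using this)
  have key2 : φ (F * ∏ i ∈ Finset.range (2*(n+1)), (1 - (X^2)^(2*i+1))) =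
      φ ((∏ i ∈ Finset.range (n+1), (1 + (X^2)^(2*i+1)))^2 *
        ∏ i ∈ Finset.range (2*(n+1)), (1 + (X^2)^(i+1))) := by
    simp only [hF, map_mul, map_sum, map_prod, map_pow, map_add, map_sub, map_one, map_neg]
    exact key
  rw [Ideal.Quotient.eq, Ideal.mem_span_singleton, X_pow_dvd_iff] at key2
  have hnn : NN (n+1) ((∏ i ∈ Finset.range (n+1), (1 + (X^2)^(2*i+1)))^2 *
        ∏ i ∈ Finset.range (2*(n+1)), (1 + (X^2)^(i+1))) := by
    simp only [← pow_mul]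
    rw [pow_two]
    exact NN_mul (NN_mul (NN_prod _ _ fun i => NN_one_add _ _) (NN_prod _ _ fun i => NN_one_add _ _))
      (NN_prod _ _ fun i => NN_one_add _ _)
  intro m hm
  have h1 := key2 m hm
  have h2 := hnn m hm
  rw [map_sub, sub_eq_zero] at h1
  rw [h1]; exact h2

lemma parity {l : Multiset ℕ} (h : ∀ x ∈ l, Odd x) : l.sum % 2 = Multiset.card l % 2 := by
  induction l using Multiset.induction with
  | empty => simp
  | cons a l ih =>
    have := ih fun x hx => h x (Multiset.mem_cons_of_mem hx)
    have := Nat.odd_iff.1 (h a (Multiset.mem_cons_self a l))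
    rw [Multiset.sum_cons, Multiset.card_cons]
    omega

/-- swap the two overpartitions -/
def sw (t : (Multiset ℕ × Finset ℕ) × Multiset ℕ × (Multiset ℕ × Finset ℕ)) :
    (Multiset ℕ × Finset ℕ) × Multiset ℕ × (Multiset ℕ × Finset ℕ) :=
  (t.2.2, Multiset.replicate (Multiset.card t.1.1) (2 * Multiset.card t.2.2.1), t.1)

lemma sw_mem {n : ℕ} {t} (h : t ∈ overCPSet n) : sw t ∈ overCPSet n := by
  obtain ⟨h1, h2, h3, h4, h5, h6⟩ := h
  refine ⟨h3, h4, h1, h2, rfl, ?_⟩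
  rw [h5] at h6
  simp only [sw, Multiset.sum_replicate, smul_eq_mul] at h6 ⊢
  linarith

lemma sw_sw {n : ℕ} {t} (h : t ∈ overCPSet n) : sw (sw t) = t := by
  obtain ⟨h1, h2, h3, h4, h5, h6⟩ := h
  simp only [sw]
  rw [← h5]

lemma par_CP {n : ℕ} {t} (h : t ∈ overCPSet n) :
    n % 2 = (Multiset.card t.1.1 + Multiset.card t.2.2.1) % 2 := by
  obtain ⟨h1, h2, h3, h4, h5, h6⟩ := h
  have := parity h1
  have := parity h3
  rw [h5, Multiset.sum_replicate, smul_eq_mul,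
    show ∀ a b : ℕ, a * (2*b) = 2*(a*b) by intros; ring] at h6
  omega

lemma odd_case {n : ℕ} (hn : Odd n) : overCPOdd n = overCPEven n := by
  rw [Nat.odd_iff] at hn
  refine Set.ncard_congr (fun t _ => sw t) ?_ ?_ ?_
  · rintro t ⟨h, ho⟩
    refine ⟨sw_mem h, ?_⟩
    have := par_CP h
    rw [Nat.odd_iff] at ho
    simp only [sw, Nat.even_iff]
    omega
  · intro a b ha hb hab
    rw [← sw_sw ha.1, hab, sw_sw hb.1]
  · rintro t ⟨h, ho⟩
    refine ⟨sw t, ⟨sw_mem h, ?_⟩, sw_sw h⟩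
    have := par_CP h
    rw [Nat.even_iff] at ho
    simp only [sw, Nat.odd_iff]
    omega

end OCP

theorem stmt16 (n : ℕ) :
    (Even n → overCPOdd n ≤ overCPEven n) ∧ (Odd n → overCPOdd n = overCPEven n) :=
  ⟨fun _ => by exact_mod_cast OCP.diff_nonneg n, OCP.odd_case⟩
end
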